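/- arXiv:2412.15771 — 3 statements merged into one kernel-verified Lean document; each statement's English description precedes it below -/
import Mathlib

section
/- Let n be even and let V be a smooth bivector field on an open set U ⊆ ℝⁿ such that for every y ∈ U the linear map V♮_y : (ℝⁿ)* → ℝⁿ determined by εⁱ(V♮_y(w)) = V_y(w,εⁱ) is bijective (V has maximal rank n). Then V has constant coefficients on a neighbourhood of a point x ∈ U if and only if its Schouten–Nijenhuis bracket with itself vanishes near x, i.e. Σ_{l=1}^{n} ( V^{li} ∂V^{jk}/∂x^l + V^{lj} ∂V^{ki}/∂x^l + V^{lk} ∂V^{ij}/∂x^l ) = 0 on a neighbourhood of x for all i,j,k, where V^{ij}(y) = V_y(εⁱ,εʲ). -/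
/-- Constant coefficients for a `q`-vector field (see context). -/
def HasConstantCoefficientsVecAt (n q : ℕ) (U : Set (Fin n → ℝ))
    (V : (Fin n → ℝ) → (((Fin n → ℝ) →L[ℝ] ℝ) [×q]→L[ℝ] ℝ)) (x : Fin n → ℝ) : Prop :=
  ∃ W : Set (Fin n → ℝ), IsOpen W ∧ x ∈ W ∧ W ⊆ U ∧
    ∃ u : (Fin n → ℝ) → (Fin n → ℝ),
      ContDiffOn ℝ (⊤ : ℕ∞) u W ∧ Set.InjOn u W ∧ IsOpen (u '' W) ∧
      (∀ y ∈ W, Function.Bijective (fderiv ℝ u y)) ∧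
      ∃ c : ((Fin n → ℝ) →L[ℝ] ℝ) [×q]→L[ℝ] ℝ,
        ∀ y ∈ W, ∀ w : Fin q → ((Fin n → ℝ) →L[ℝ] ℝ),
          c w = V y (fun i => (w i).comp (fderiv ℝ u y))

noncomputable section
open Set Filter Topology
open scoped ContDiff

set_option maxSynthPendingDepth 3
set_option linter.unusedSectionVars false
namespace Darboux

variable {E F G : Type} [NormedAddCommGroup E] [NormedSpace ℝ E]
  [NormedAddCommGroup F] [NormedSpace ℝ F] [NormedAddCommGroup G] [NormedSpace ℝ G]

/-- The unit interval as a compact space. -/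
abbrev I := unitInterval

/-- Pointwise application of a continuous bilinear map to continuous curves. -/
def lift (b : E →L[ℝ] F →L[ℝ] G) : C(I, E) →L[ℝ] C(I, F) →L[ℝ] C(I, G) :=
  LinearMap.mkContinuous₂
    (LinearMap.mk₂ ℝ (fun (f : C(I, E)) (g : C(I, F)) =>
      (⟨fun s => b (f s) (g s), by fun_prop⟩ : C(I, G)))
      (by intro f f' g; ext s; simp) (by intro c f g; ext s; simp)
      (by intro f f' g; ext s; simp) (by intro c f g; ext s; simp)) ‖b‖ (by
      intro f g
      rw [ContinuousMap.norm_le _ (by positivity)]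
      intro s
      refine (b.le_opNorm₂ _ _).trans ?_
      gcongr
      · exact f.norm_coe_le_norm s
      · exact g.norm_coe_le_norm s)

@[simp] lemma lift_apply (b : E →L[ℝ] F →L[ℝ] G) (f : C(I, E)) (g : C(I, F)) (s : I) :
    lift b f g s = b (f s) (g s) := rfl

/-- Composition operator. -/
def nem (g : E → F) (hg : Continuous g) (c : C(I, E)) : C(I, F) := ⟨fun s => g (c s), by fun_prop⟩

@[simp] lemma nem_apply (g : E → F) (hg : Continuous g) (c : C(I, E)) (s : I) :
    nem g hg c s = g (c s) := rfl

lemma continuous_nem (g : E → F) (hg : Continuous g) : Continuous (nem g hg) :=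
  ContinuousMap.continuous_postcomp ⟨g, hg⟩

lemma hasFDerivAt_nem (g : E → F) (hg : ContDiff ℝ 1 g) (c : C(I, E)) :
    HasFDerivAt (nem g hg.continuous)
      (lift (ContinuousLinearMap.id ℝ (E →L[ℝ] F))
        (nem (fderiv ℝ g) (hg.continuous_fderiv one_ne_zero) c)) c := by
  have hc := (continuous_nem (fderiv ℝ g) (hg.continuous_fderiv one_ne_zero)).comp
    (show Continuous fun θ : E => c + ContinuousMap.const I θ from
      continuous_const.add ContinuousMap.continuous_const')
  rw [hasFDerivAt_iff_isLittleO_nhds_zero, Asymptotics.isLittleO_iff]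
  intro ε hε
  have h1 := Metric.continuous_iff.1 hc 0 ε hε
  obtain ⟨δ, hδ, h⟩ := h1
  filter_upwards [Metric.ball_mem_nhds (0 : C(I, E)) hδ] with η hη
  rw [mem_ball_zero_iff] at hη
  rw [ContinuousMap.norm_le _ (by positivity)]
  intro s
  have hηs : ‖η s‖ < δ := (η.norm_coe_le_norm s).trans_lt hη
  have key : ‖g (c s + η s) - g (c s) - (fderiv ℝ g (c s)) (c s + η s - c s)‖
      ≤ ε * ‖c s + η s - c s‖ := by
    refine Convex.norm_image_sub_le_of_norm_hasFDerivWithin_le'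
      (f := g) (f' := fderiv ℝ g) (s := Metric.ball (c s) δ) ?_ ?_ (convex_ball _ _) ?_ ?_
    · intro y _
      exact ((hg.differentiable one_ne_zero) y).hasFDerivAt.hasFDerivWithinAt
    · intro y hy
      have := h (y - c s) (by simpa [dist_eq_norm] using hy)
      rw [dist_eq_norm] at this
      have h2 := (ContinuousMap.norm_coe_le_norm _ s).trans this.le
      simpa using h2
    · simpa using hδ
    · simpa using hηs
  have h3 : ‖g (c s + η s) - g (c s) - (fderiv ℝ g (c s)) (η s)‖ ≤ ε * ‖η s‖ := by
    simpa using key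
  refine le_trans ?_ (h3.trans (by gcongr; exact η.norm_coe_le_norm s))
  simp

lemma contDiff_nem_nat (n : ℕ) : ∀ {F : Type} [NormedAddCommGroup F] [NormedSpace ℝ F]
    (g : E → F) (hg : ContDiff ℝ ∞ g), ContDiff ℝ n (nem g hg.continuous) := by
  induction n with
  | zero => intro F _ _ g hg; exact contDiff_zero.2 (continuous_nem _ _)
  | succ n ih =>
    intro F _ _ g hg
    have h1 : ContDiff ℝ 1 g := hg.of_le (by exact_mod_cast le_top)
    have h2 : ContDiff ℝ ∞ (fderiv ℝ g) := hg.fderiv_right (by simp)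
    refine contDiff_succ_iff_hasFDerivAt.2
      ⟨fun c => lift (ContinuousLinearMap.id ℝ (E →L[ℝ] F)) (nem (fderiv ℝ g) h2.continuous c),
        ?_, fun c => hasFDerivAt_nem g h1 c⟩
    exact (ContinuousLinearMap.contDiff _).comp (ih (fderiv ℝ g) h2)

lemma contDiff_nem (g : E → F) (hg : ContDiff ℝ ∞ g) : ContDiff ℝ ∞ (nem g hg.continuous) :=
  contDiff_infty.2 fun n => contDiff_nem_nat n g hg

/-- Extension of a curve to the real line. -/
def ext (c : C(I, E)) : ℝ → E := Set.IccExtend zero_le_one c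

lemma continuous_ext (c : C(I, E)) : Continuous (ext c) := c.continuous.Icc_extend'

lemma ext_of_mem (c : C(I, E)) {t : ℝ} (ht : t ∈ Icc (0 : ℝ) 1) : ext c t = c ⟨t, ht⟩ :=
  Set.IccExtend_of_mem _ _ ht

lemma norm_ext_le (c : C(I, E)) (t : ℝ) : ‖ext c t‖ ≤ ‖c‖ := c.norm_coe_le_norm _

/-- Primitive of a curve. -/
def prim (c : C(I, E)) (t : ℝ) : E := ∫ s in (0 : ℝ)..t, ext c s

lemma hasDerivAt_prim [CompleteSpace E] (c : C(I, E)) (t : ℝ) :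
    HasDerivAt (prim c) (ext c t) t :=
  intervalIntegral.integral_hasDerivAt_right ((continuous_ext c).intervalIntegrable _ _)
    (continuous_ext c).stronglyMeasurable.stronglyMeasurableAtFilter (continuous_ext c).continuousAt

/-- Integration operator. -/
def J [CompleteSpace E] : C(I, E) →L[ℝ] C(I, E) :=
  LinearMap.mkContinuous
    { toFun := fun c => (⟨fun t => prim c t,
        (continuous_iff_continuousAt.2 fun t => (hasDerivAt_prim c t).continuousAt).comp
          continuous_subtype_val⟩ : C(I, E))
      map_add' := by
        intro c d
        ext t
        simp only [ContinuousMap.coe_mk, ContinuousMap.add_apply, prim]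
        rw [← intervalIntegral.integral_add ((continuous_ext c).intervalIntegrable _ _)
          ((continuous_ext d).intervalIntegrable _ _)]
        rfl
      map_smul' := by
        intro r c
        ext t
        simp only [ContinuousMap.coe_mk, ContinuousMap.smul_apply, prim, RingHom.id_apply]
        rw [← intervalIntegral.integral_smul]
        rfl } 1 (by
    intro c
    rw [ContinuousMap.norm_le _ (by positivity)]
    intro t
    have := intervalIntegral.norm_integral_le_of_norm_le_const (a := 0) (b := (t : ℝ))
      (f := ext c) (C := ‖c‖) (fun s _ => norm_ext_le c s)
    refine this.trans ?_
    rw [sub_zero, abs_of_nonneg t.2.1, one_mul]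
    exact mul_le_of_le_one_right (norm_nonneg _) t.2.2)

lemma J_apply [CompleteSpace E] (c : C(I, E)) (t : I) : J c t = prim c t := rfl

/-- Constant curves. -/
def cst : E →L[ℝ] C(I, E) :=
  LinearMap.mkContinuous
    { toFun := fun y => ContinuousMap.const I y
      map_add' := fun _ _ => rfl
      map_smul' := fun _ _ => rfl } 1 (by
    intro y
    rw [ContinuousMap.norm_le _ (by positivity)]
    intro t
    exact (one_mul ‖y‖).ge)

@[simp] lemma cst_apply (y : E) (t : I) : cst y t = y := rfl

/-- Evaluation. -/
def ev (t : I) : C(I, E) →L[ℝ] E :=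
  LinearMap.mkContinuous
    { toFun := fun c => c t
      map_add' := fun _ _ => rfl
      map_smul' := fun _ _ => rfl } 1 (by
    intro c
    simpa using c.norm_coe_le_norm t)

@[simp] lemma ev_apply (c : C(I, E)) (t : I) : ev t c = c t := rfl

/-- The coordinate of the interval. -/
def idI : C(I, ℝ) := ⟨Subtype.val, continuous_subtype_val⟩

@[simp] lemma idI_apply (t : I) : idI t = (t : ℝ) := rfl

/-- Multiplication by the coordinate. -/
def mulS : C(I, E) →L[ℝ] C(I, E) := lift (ContinuousLinearMap.lsmul ℝ ℝ) idI

@[simp] lemma mulS_apply (c : C(I, E)) (t : I) : mulS c t = (t : ℝ) • c t := rfl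

lemma smooth_inv [CompleteSpace E] {f : E → F} {O : Set E} (hO : IsOpen O)
    (hf : ContDiffOn ℝ ∞ f O) {a : E} (ha : a ∈ O) (f' : E ≃L[ℝ] F)
    (hf' : HasFDerivAt f (f' : E →L[ℝ] F) a) :
    ∃ e : OpenPartialHomeomorph E F, (e : E → F) = f ∧ a ∈ e.source ∧ e.source ⊆ O ∧
      (∀ y ∈ e.source, ∃ g' : E ≃L[ℝ] F, HasFDerivAt f (g' : E →L[ℝ] F) y) ∧
      ContDiffOn ℝ ∞ e.symm e.target := by
  have hfa : ContDiffAt ℝ ∞ f a := hf.contDiffAt (hO.mem_nhds ha)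
  have hne : (∞ : WithTop ℕ∞) ≠ 0 := by simp
  set e0 := hfa.toOpenPartialHomeomorph f hf' hne with he0
  have hdc : ContinuousOn (fderiv ℝ f) O := hf.continuousOn_fderiv_of_isOpen hO (by simp)
  set O' := O ∩ fderiv ℝ f ⁻¹' (range ((↑) : (E ≃L[ℝ] F) → E →L[ℝ] F)) with hO'
  have hO'o : IsOpen O' := hdc.isOpen_inter_preimage hO (ContinuousLinearEquiv.isOpen)
  have haO' : a ∈ O' := ⟨ha, f', hf'.fderiv.symm⟩
  have hd : ∀ y ∈ O', ∃ g' : E ≃L[ℝ] F, HasFDerivAt f (g' : E →L[ℝ] F) y := by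
    rintro y ⟨hy, g', hg'⟩
    refine ⟨g', ?_⟩
    rw [hg']
    exact ((hf.contDiffAt (hO.mem_nhds hy)).differentiableAt hne).hasFDerivAt
  have hsrc : (e0.restrOpen O' hO'o).source = e0.source ∩ O' := rfl
  refine ⟨e0.restrOpen O' hO'o, rfl, ?_, ?_, ?_, ?_⟩
  · exact ⟨ContDiffAt.mem_toOpenPartialHomeomorph_source hfa hf' hne, haO'⟩
  · intro y hy; exact hy.2.1
  · intro y hy; exact hd y hy.2
  · intro z hz
    have hz' := (e0.restrOpen O' hO'o).map_target hz
    obtain ⟨g', hg'⟩ := hd _ hz'.2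
    exact ((e0.restrOpen O' hO'o).contDiffAt_symm hz hg'
      (hf.contDiffAt (hO.mem_nhds hz'.2.1))).contDiffWithinAt

lemma param_int [CompleteSpace F] (P : E → F) (hP : ContDiff ℝ ∞ P) :
    ∃ β : E → F, ContDiff ℝ ∞ β ∧ (∀ y, β y = ∫ t in (0:ℝ)..1, t • P (t • y)) ∧
      ∀ y a, fderiv ℝ β y a = ∫ t in (0:ℝ)..1, t • fderiv ℝ P (t • y) (t • a) := by
  have hP1 : ContDiff ℝ 1 P := hP.of_le (by exact_mod_cast le_top)
  set T : C(I, F) →L[ℝ] F := (ev 1 ∘L J) ∘L mulS with hT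
  set lin : E →L[ℝ] C(I, E) := mulS ∘L cst with hlin
  set β : E → F := fun y => T (nem P hP.continuous (lin y)) with hβ
  have hβs : ContDiff ℝ ∞ β := T.contDiff.comp ((contDiff_nem P hP).comp lin.contDiff)
  have hβd : ∀ y, HasFDerivAt β (T ∘L (lift (ContinuousLinearMap.id ℝ _)
        (nem (fderiv ℝ P) (hP1.continuous_fderiv one_ne_zero) (lin y))) ∘L lin) y := by
    intro y
    exact T.hasFDerivAt.comp y ((hasFDerivAt_nem P hP1 (lin y)).comp y lin.hasFDerivAt)
  have hTint : ∀ (c : C(I, F)) (f : ℝ → F), (∀ t : I, f t = c t) →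
      T c = ∫ t in (0:ℝ)..1, t • f t := by
    intro c f hf
    have h0 : T c = ∫ t in (0:ℝ)..1, ext (mulS c) t := rfl
    rw [h0]
    refine intervalIntegral.integral_congr ?_
    intro t ht
    rw [uIcc_of_le zero_le_one] at ht
    simp only [ext_of_mem _ ht, mulS_apply]
    rw [← hf ⟨t, ht⟩]
  refine ⟨β, hβs, ?_, ?_⟩
  · intro y
    exact hTint _ (fun t => P (t • y)) (fun t => rfl)
  · intro y a
    rw [(hβd y).fderiv]
    exact hTint _ (fun t => fderiv ℝ P (t • y) (t • a)) (fun t => rfl)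

lemma fderiv_apply₂ {P : E → E →L[ℝ] E →L[ℝ] ℝ} {y : E} (hP : DifferentiableAt ℝ P y) (a b : E) :
    HasFDerivAt (fun z => P z a b) (((ContinuousLinearMap.apply ℝ ℝ b) ∘L
      (ContinuousLinearMap.apply ℝ (E →L[ℝ] ℝ) a)) ∘L (fderiv ℝ P y)) y :=
  (((ContinuousLinearMap.apply ℝ ℝ b) ∘L
    (ContinuousLinearMap.apply ℝ (E →L[ℝ] ℝ) a)).hasFDerivAt).comp _ hP.hasFDerivAt

lemma fderiv_alt (P : E → E →L[ℝ] E →L[ℝ] ℝ) (hP : ContDiff ℝ 1 P) {O : Set E} (hO : IsOpen O)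
    (halt : ∀ y ∈ O, ∀ a b, P y a b = - P y b a) {y : E} (hy : y ∈ O) (a b c : E) :
    fderiv ℝ P y a b c = - fderiv ℝ P y a c b := by
  have hh : (fun z => P z b c) =ᶠ[𝓝 y] fun z => - P z c b := by
    filter_upwards [hO.mem_nhds hy] with z hz using halt z hz b c
  have hd := hP.differentiable one_ne_zero y
  have h4 := ((fderiv_apply₂ hd b c).congr_of_eventuallyEq hh.symm).unique (fderiv_apply₂ hd c b).neg
  exact DFunLike.congr_fun h4 a

lemma poincare [CompleteSpace E] (P : E → E →L[ℝ] E →L[ℝ] ℝ) (hP : ContDiff ℝ ∞ P)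
    (hP0 : P 0 = 0) (r : ℝ)
    (halt : ∀ y ∈ Metric.ball (0 : E) r, ∀ a b, P y a b = - P y b a)
    (hcl : ∀ y ∈ Metric.ball (0 : E) r, ∀ a b c,
      fderiv ℝ P y a b c + fderiv ℝ P y b c a + fderiv ℝ P y c a b = 0) :
    ∃ α : E → E →L[ℝ] ℝ, ContDiff ℝ ∞ α ∧ α 0 = 0 ∧ fderiv ℝ α 0 = 0 ∧
      ∀ y ∈ Metric.ball (0 : E) r, ∀ a b, fderiv ℝ α y a b - fderiv ℝ α y b a = P y a b := by
  have hP1 : ContDiff ℝ 1 P := hP.of_le (by exact_mod_cast le_top)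
  obtain ⟨β, hβs, hβe, hβd⟩ := param_int P hP
  have hβ0 : β 0 = 0 := by
    simp [hβe, hP0]
  have hdiff : ContDiff ℝ ∞ (fun y => β y y) := hβs.clm_apply contDiff_id
  have hd : ∀ y, HasFDerivAt (fun y => β y y) ((β y) + (fderiv ℝ β y).flip y) y := by
    intro y
    have h1 : HasFDerivAt β (fderiv ℝ β y) y := (hβs.differentiable (by simp) y).hasFDerivAt
    have h2 := h1.clm_apply (hasFDerivAt_id y)
    rw [ContinuousLinearMap.comp_id] at h2
    exact h2
  have hIntEq : ∀ (c : ℝ → (E →L[ℝ] E →L[ℝ] ℝ)) (_ : Continuous c) (a b : E),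
      (∫ t in (0:ℝ)..1, c t) a b = ∫ t in (0:ℝ)..1, c t a b := by
    intro c hc a b
    have hi : IntervalIntegrable c MeasureTheory.volume 0 1 := hc.intervalIntegrable _ _
    have := ContinuousLinearMap.intervalIntegral_comp_comm
      ((ContinuousLinearMap.apply ℝ ℝ b) ∘L (ContinuousLinearMap.apply ℝ (E →L[ℝ] ℝ) a)) hi
    exact this.symm
  have hPc := hP1.continuous
  have hP'c := hP1.continuous_fderiv one_ne_zero
  refine ⟨fun y => β y y, hdiff, by simp [hβ0], ?_, ?_⟩
  · rw [(hd 0).fderiv, hβ0]; ext; simp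
  · intro y hy a b
    rw [(hd y).fderiv]
    simp only [add_apply, ContinuousLinearMap.flip_apply, hβd, hβe]
    have hc1 : Continuous fun t : ℝ => t • P (t • y) := by fun_prop
    have hc2 : ∀ a, Continuous fun t : ℝ => t • fderiv ℝ P (t • y) (t • a) := by
      intro a; fun_prop
    rw [hIntEq _ hc1, hIntEq _ hc1, hIntEq _ (hc2 _), hIntEq _ (hc2 _)]
    have hi : ∀ (c : ℝ → (E →L[ℝ] E →L[ℝ] ℝ)) (_ : Continuous c) (a b : E),
      IntervalIntegrable (fun t => c t a b) MeasureTheory.volume 0 1 := by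
      intro c hc a b
      exact Continuous.intervalIntegrable (by fun_prop) _ _
    rw [← intervalIntegral.integral_add (hi _ hc1 _ _) (hi _ (hc2 _) _ _),
      ← intervalIntegral.integral_add (hi _ hc1 _ _) (hi _ (hc2 _) _ _),
      ← intervalIntegral.integral_sub ((hi _ hc1 _ _).add (hi _ (hc2 _) _ _))
        ((hi _ hc1 _ _).add (hi _ (hc2 _) _ _))]
    have hder : ∀ t : ℝ, HasDerivAt (fun t : ℝ => t ^ 2 * P (t • y) a b)
        (2 * t * P (t • y) a b + t ^ 2 * fderiv ℝ P (t • y) y a b) t := by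
      intro t
      have h1 : HasDerivAt (fun t : ℝ => t • y) y t := by
        simpa using (hasDerivAt_id t).smul_const y
      have h2 : HasDerivAt (fun t : ℝ => P (t • y)) (fderiv ℝ P (t • y) y) t :=
        ((hP1.differentiable one_ne_zero (t • y)).hasFDerivAt).comp_hasDerivAt t h1
      have h3 : HasDerivAt (fun t : ℝ => P (t • y) a b) (fderiv ℝ P (t • y) y a b) t :=
        (((ContinuousLinearMap.apply ℝ ℝ b) ∘L
          (ContinuousLinearMap.apply ℝ (E →L[ℝ] ℝ) a)).hasFDerivAt).comp_hasDerivAt t h2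
      have h4 := (hasDerivAt_pow 2 t).mul h3
      refine h4.congr_deriv ?_
      simp
    have hftc := intervalIntegral.integral_eq_sub_of_hasDerivAt (a := 0) (b := 1)
      (f := fun t : ℝ => t ^ 2 * P (t • y) a b) (fun t _ => hder t) (by
        exact Continuous.intervalIntegrable (by fun_prop) _ _)
    simp only [one_pow, one_mul, one_smul, ne_eq, OfNat.ofNat_ne_zero, not_false_eq_true,
      zero_pow, zero_mul, sub_zero] at hftc
    rw [← hftc]
    refine intervalIntegral.integral_congr ?_
    intro t ht
    rw [uIcc_of_le zero_le_one] at ht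
    have hty : t • y ∈ Metric.ball (0 : E) r := by
      rw [mem_ball_zero_iff] at hy ⊢
      rw [norm_smul, Real.norm_eq_abs, abs_of_nonneg ht.1]
      exact (mul_le_of_le_one_left (norm_nonneg _) ht.2).trans_lt hy
    have e1 := halt _ hty a b
    have e2 := hcl _ hty y a b
    have e3 := fderiv_alt P hP1 Metric.isOpen_ball halt hty a y b
    simp only [smul_apply, smul_eq_mul, map_smul]
    linear_combination (-t) * e1 - t ^ 2 * e2 + t ^ 2 * e3

lemma lift_hasFDerivAt {H : Type} [NormedAddCommGroup H] [NormedSpace ℝ H]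
    {f : H → C(I, E →L[ℝ] F)} {g : H → C(I, E)} {f' : H →L[ℝ] C(I, E →L[ℝ] F)}
    {g' : H →L[ℝ] C(I, E)} {x : H} (hf : HasFDerivAt f f' x) (hg : HasFDerivAt g g' x) :
    ∃ L : H →L[ℝ] C(I, F),
      HasFDerivAt (fun y => lift (ContinuousLinearMap.id ℝ (E →L[ℝ] F)) (f y) (g y)) L x ∧
      ∀ v s, L v s = f x s (g' v s) + f' v s (g x s) :=
  ⟨_, (lift (ContinuousLinearMap.id ℝ (E →L[ℝ] F))).hasFDerivAt_of_bilinear hf hg,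
    fun _ _ => rfl⟩

set_option maxHeartbeats 1000000 in
lemma flow [CompleteSpace E] (Θ : E → E →L[ℝ] E) (a : E → E) (hΘ : ContDiff ℝ ∞ Θ)
    (ha : ContDiff ℝ ∞ a) (hΘ0 : Θ 0 = 0) (ha0 : a 0 = 0) (ha1 : fderiv ℝ a 0 = 0)
    (r : ℝ) (hr : 0 < r) :
    ∃ O : Set E, IsOpen O ∧ 0 ∈ O ∧ ∃ cur : E → C(I, E), ContDiffOn ℝ ∞ cur O ∧ cur 0 = 0 ∧
      ∀ z ∈ O, ‖cur z‖ < r ∧ ∃ X : C(I, E), (∀ t, cur z t = z + prim X t) ∧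
        ∀ v, ∃ Y : C(I, E), (∀ t, fderiv ℝ cur z v t = v + prim Y t) ∧
          ∀ s : I, Y s + (s : ℝ) • Θ (cur z s) (Y s)
            + (s : ℝ) • (fderiv ℝ Θ (cur z s) (fderiv ℝ cur z v s)) (X s)
            = - fderiv ℝ a (cur z s) (fderiv ℝ cur z v s) := by
  have hΘ1 : ContDiff ℝ 1 Θ := hΘ.of_le (by exact_mod_cast le_top)
  have ha1' : ContDiff ℝ 1 a := ha.of_le (by exact_mod_cast le_top)
  set A : C(I, E) → C(I, E →L[ℝ] E) := fun c => 1 + mulS (nem Θ hΘ.continuous c) with hA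
  have hAs : ContDiff ℝ ∞ A :=
    contDiff_const.add ((ContinuousLinearMap.contDiff _).comp (contDiff_nem Θ hΘ))
  have hA0 : A 0 = 1 := by
    ext1 s
    simp [hA, hΘ0]
  set N : C(I, E) → C(I, E) := fun c =>
    - lift (ContinuousLinearMap.id ℝ (E →L[ℝ] E)) (Ring.inverse (A c)) (nem a ha.continuous c)
    with hN
  set O1 : Set C(I, E) := A ⁻¹' {x | IsUnit x} with hO1
  have hO1o : IsOpen O1 := Units.isOpen.preimage hAs.continuous
  have h01 : (0 : C(I, E)) ∈ O1 := by
    simp [hO1, hA0]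
  have hinv : ∀ c ∈ O1, ContDiffAt ℝ ∞ (fun c => Ring.inverse (A c)) c := by
    rintro c ⟨u, hu⟩
    have h1 := contDiffAt_ringInverse ℝ (n := ∞) u
    rw [hu] at h1
    exact h1.comp c hAs.contDiffAt
  have hNs : ∀ c ∈ O1, ContDiffAt ℝ ∞ N c := by
    intro c hc
    exact (((ContinuousLinearMap.contDiff _).contDiffAt.comp c (hinv c hc)).clm_apply
      (contDiff_nem a ha).contDiffAt).neg
  have hne : (∞ : WithTop ℕ∞) ≠ 0 := by simp
  have hN0 : HasFDerivAt N (0 : C(I, E) →L[ℝ] C(I, E)) 0 := by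
    obtain ⟨L, hL, hL'⟩ := lift_hasFDerivAt
      ((hinv 0 h01).differentiableAt hne).hasFDerivAt (hasFDerivAt_nem a ha1' 0)
    have : L = 0 := by
      ext v s
      rw [hL']
      simp [ha0, ha1]
    rw [this] at hL
    have hL2 := hL.neg
    rw [neg_zero] at hL2
    exact hL2
  have hJd : ∀ c : C(I, E), HasFDerivAt (fun c => J c) (J : C(I, E) →L[ℝ] C(I, E)) c :=
    fun c => ContinuousLinearMap.hasFDerivAt _
  have hMd : ∀ c : C(I, E →L[ℝ] E), HasFDerivAt (fun c => mulS c)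
      (mulS : C(I, E →L[ℝ] E) →L[ℝ] C(I, E →L[ℝ] E)) c :=
    fun c => ContinuousLinearMap.hasFDerivAt _
  have hJs : ContDiff ℝ ∞ (fun c : C(I, E) => J c) := ContinuousLinearMap.contDiff _
  have hcs : ContDiff ℝ ∞ (fun z : E => cst z) := ContinuousLinearMap.contDiff _
  set Φ : C(I, E) → C(I, E) := fun c => c - J (N c) with hΦ
  have hΦd : ∀ c ∈ O1, HasFDerivAt Φ (ContinuousLinearMap.id ℝ _ - J ∘L fderiv ℝ N c) c := by
    intro c hc
    exact (hasFDerivAt_id c).sub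
      ((hJd (N c)).comp c ((hNs c hc).differentiableAt hne).hasFDerivAt)
  have hΦ0 : HasFDerivAt Φ ((ContinuousLinearEquiv.refl ℝ C(I, E) : C(I, E) ≃L[ℝ] C(I, E)) :
      C(I, E) →L[ℝ] C(I, E)) 0 := by
    have := hΦd 0 h01
    rw [hN0.fderiv] at this
    simpa using this
  have hΦz : Φ 0 = 0 := by
    have : nem a ha.continuous 0 = 0 := by
      ext1 s; simp [ha0]
    simp [hΦ, hN, this]
  obtain ⟨e, he, h0e, heO, -, hes⟩ := smooth_inv (f := Φ) (O := O1 ∩ Metric.ball 0 r)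
    (hO1o.inter Metric.isOpen_ball)
    (fun c hc => (contDiffAt_id.sub
      (hJs.contDiffAt.comp c (hNs c hc.1))).contDiffWithinAt)
    (a := 0) ⟨h01, by simpa using hr⟩ _ hΦ0
  have hOo : IsOpen (cst ⁻¹' e.target : Set E) := e.open_target.preimage cst.continuous
  refine ⟨cst ⁻¹' e.target, hOo, ?_, fun z => e.symm (cst z), ?_, ?_, ?_⟩
  · have := e.map_source h0e
    rw [he, hΦz] at this
    simpa using this
  · exact hes.comp hcs.contDiffOn (fun z hz => hz)
  · have := e.left_inv h0e
    rw [he, hΦz] at this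
    simpa using this
  · intro z hz
    have hsrc := e.map_target hz
    obtain ⟨hc1, hcr⟩ := heO hsrc
    refine ⟨by simpa using hcr, N (e.symm (cst z)), ?_, ?_⟩
    · intro t
      have h1 := e.right_inv hz
      rw [he] at h1
      have h2 := DFunLike.congr_fun h1 t
      simp only [hΦ, ContinuousMap.sub_apply, J_apply, cst_apply] at h2
      exact sub_eq_iff_eq_add.1 h2
    intro v
    have hcur : HasFDerivAt (fun z => e.symm (cst z)) (fderiv ℝ (fun z => e.symm (cst z)) z) z :=
      (((hes.contDiffAt (e.open_target.mem_nhds hz)).comp z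
        hcs.contDiffAt).differentiableAt hne).hasFDerivAt
    set D := fderiv ℝ (fun z => e.symm (cst z)) z with hD
    set c := e.symm (cst z) with hc
    have hcomp := (hΦd c hc1).comp z hcur
    have heq : (Φ ∘ fun z => e.symm (cst z)) =ᶠ[𝓝 z] fun z => cst z := by
      filter_upwards [hOo.mem_nhds hz] with y hy
      have h1 := e.right_inv hy
      rw [he] at h1
      exact h1
    have huniq := (hcomp.congr_of_eventuallyEq heq.symm).unique (cst.hasFDerivAt (x := z))
    have hNd : HasFDerivAt N (fderiv ℝ N c) c := ((hNs c hc1).differentiableAt hne).hasFDerivAt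
    refine ⟨fderiv ℝ N c (D v), ?_, ?_⟩
    · intro t
      have h2 := DFunLike.congr_fun (DFunLike.congr_fun huniq v) t
      exact sub_eq_iff_eq_add.1 h2
    · intro s
      have hAd : HasFDerivAt A (mulS ∘L (lift (ContinuousLinearMap.id ℝ _)
          (nem (fderiv ℝ Θ) (hΘ1.continuous_fderiv one_ne_zero) c))) c :=
        ((hMd (nem Θ hΘ.continuous c)).comp c (hasFDerivAt_nem Θ hΘ1 c)).const_add 1
      obtain ⟨L, hL, hL'⟩ := lift_hasFDerivAt hAd hNd
      have hid : (fun c => lift (ContinuousLinearMap.id ℝ (E →L[ℝ] E)) (A c) (N c))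
          =ᶠ[𝓝 c] fun c => - nem a ha.continuous c := by
        filter_upwards [hO1o.mem_nhds hc1] with d hd
        ext1 t
        have h1 := DFunLike.congr_fun (Ring.mul_inverse_cancel (A d) hd) t
        have h2 := DFunLike.congr_fun h1 (a (d t))
        have h3 : A d t (Ring.inverse (A d) t (a (d t))) = a (d t) := h2
        have h4 : N d t = - Ring.inverse (A d) t (a (d t)) := rfl
        have h5 : A d t (N d t) = - a (d t) := by rw [h4, map_neg, h3]
        exact h5
      have hu := (hL.congr_of_eventuallyEq hid.symm).unique (hasFDerivAt_nem a ha1' c).neg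
      have h6 := DFunLike.congr_fun (DFunLike.congr_fun hu (D v)) s
      rw [hL'] at h6
      exact h6

lemma form_deriv {P : E → E →L[ℝ] E →L[ℝ] ℝ} (hP : ContDiff ℝ 1 P) {c η ζ : ℝ → E}
    {c' η' ζ' : E} {t : ℝ} (hc : HasDerivAt c c' t) (hη : HasDerivAt η η' t)
    (hζ : HasDerivAt ζ ζ' t) :
    HasDerivAt (fun t => P (c t) (η t) (ζ t))
      (fderiv ℝ P (c t) c' (η t) (ζ t) + P (c t) η' (ζ t) + P (c t) (η t) ζ') t := by
  have h1 : HasDerivAt (fun t => P (c t)) (fderiv ℝ P (c t) c') t :=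
    ((hP.differentiable one_ne_zero (c t)).hasFDerivAt).comp_hasDerivAt t hc
  exact ((h1.clm_apply hη).clm_apply hζ)

lemma moser [CompleteSpace E] (Ω : E → E →L[ℝ] E →L[ℝ] ℝ) (hΩ : ContDiff ℝ ∞ Ω)
    (r : ℝ) (hr : 0 < r)
    (halt : ∀ y ∈ Metric.ball (0 : E) r, ∀ a b, Ω y a b = - Ω y b a)
    (hcl : ∀ y ∈ Metric.ball (0 : E) r, ∀ a b c,
      fderiv ℝ Ω y a b c + fderiv ℝ Ω y b c a + fderiv ℝ Ω y c a b = 0)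
    (S : (E →L[ℝ] ℝ) →L[ℝ] E) (hS1 : ∀ w, Ω 0 (S w) = w) :
    ∃ O : Set E, IsOpen O ∧ 0 ∈ O ∧ ∃ φ : E → E, ContDiffOn ℝ ∞ φ O ∧ φ 0 = 0 ∧
      ∀ z ∈ O, φ z ∈ Metric.ball (0 : E) r ∧
        ∀ v w, Ω (φ z) (fderiv ℝ φ z v) (fderiv ℝ φ z w) = Ω 0 v w := by
  set P : E → E →L[ℝ] E →L[ℝ] ℝ := fun y => Ω y - Ω 0 with hPdef
  have hP : ContDiff ℝ ∞ P := hΩ.sub contDiff_const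
  have hP1 : ContDiff ℝ 1 P := hP.of_le (by exact_mod_cast le_top)
  have hPd : fderiv ℝ P = fderiv ℝ Ω := by
    funext y; exact fderiv_sub_const _
  have h0r : (0 : E) ∈ Metric.ball (0 : E) r := by simpa using hr
  have hPalt : ∀ y ∈ Metric.ball (0 : E) r, ∀ a b, P y a b = - P y b a := by
    intro y hy a b
    simp only [hPdef, sub_apply]
    rw [halt y hy a b, halt 0 h0r a b]
    ring
  rw [← hPd] at hcl
  obtain ⟨α, hα, hα0, hα1, hαP⟩ := poincare P hP (by simp [hPdef]) r hPalt hcl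
  have hαd : ∀ y, HasFDerivAt α (fderiv ℝ α y) y := fun y =>
    (hα.differentiable (by simp) y).hasFDerivAt
  have hΘd : ∀ y, HasFDerivAt (fun y => S ∘L P y)
      ((ContinuousLinearMap.compL ℝ E (E →L[ℝ] ℝ) E S) ∘L fderiv ℝ P y) y := fun y =>
    (ContinuousLinearMap.compL ℝ E (E →L[ℝ] ℝ) E S).hasFDerivAt.comp y
      (hP1.differentiable one_ne_zero y).hasFDerivAt
  have had : ∀ y, HasFDerivAt (fun y => S (α y)) (S ∘L fderiv ℝ α y) y := fun y =>
    S.hasFDerivAt.comp y (hαd y)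
  obtain ⟨O, hO, h0O, cur, hcur, hcur0, hflow⟩ := flow (fun y => S ∘L P y) (fun y => S (α y))
    (contDiff_const.clm_comp hP) (S.contDiff.comp hα) (by simp [hPdef]) (by simp [hα0])
    (by rw [(had 0).fderiv, hα1]; simp) r hr
  have hevs : ContDiff ℝ ∞ (fun c : C(I, E) => c 1) := (ev 1 : C(I, E) →L[ℝ] E).contDiff
  refine ⟨O, hO, h0O, fun z => cur z 1, hevs.comp_contDiffOn hcur, by simp [hcur0], ?_⟩
  intro z hz
  obtain ⟨hnorm, X, hX, hvar⟩ := hflow z hz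
  have hmem : ∀ t : I, cur z t ∈ Metric.ball (0 : E) r := fun t => by
    rw [mem_ball_zero_iff]
    exact ((cur z).norm_coe_le_norm t).trans_lt hnorm
  refine ⟨hmem 1, ?_⟩
  intro v w
  have hcd : HasFDerivAt cur (fderiv ℝ cur z) z :=
    ((hcur.contDiffAt (hO.mem_nhds hz)).differentiableAt (by simp)).hasFDerivAt
  have hφd : HasFDerivAt (fun z => cur z 1) (ev 1 ∘L fderiv ℝ cur z) z :=
    ((ev 1 : C(I, E) →L[ℝ] E).hasFDerivAt (x := cur z)).comp z hcd
  rw [hφd.fderiv]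
  obtain ⟨Yv, hYv, hYv'⟩ := hvar v
  obtain ⟨Yw, hYw, hYw'⟩ := hvar w
  -- the transported form
  set γ : ℝ → E := fun t => z + prim X t with hγ
  set η : ℝ → E := fun t => v + prim Yv t with hη
  set ζ : ℝ → E := fun t => w + prim Yw t with hζ
  have hγd : ∀ t, HasDerivAt γ (ext X t) t := fun t => (hasDerivAt_prim X t).const_add _
  have hηd : ∀ t, HasDerivAt η (ext Yv t) t := fun t => (hasDerivAt_prim Yv t).const_add _
  have hζd : ∀ t, HasDerivAt ζ (ext Yw t) t := fun t => (hasDerivAt_prim Yw t).const_add _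
  set h : ℝ → ℝ := fun t => Ω 0 (η t) (ζ t) + t * P (γ t) (η t) (ζ t) with hh
  have hhd : ∀ t, HasDerivAt h
      ((Ω 0 (ext Yv t) (ζ t) + Ω 0 (η t) (ext Yw t)) + (P (γ t) (η t) (ζ t)
        + t * (fderiv ℝ P (γ t) (ext X t) (η t) (ζ t) + P (γ t) (ext Yv t) (ζ t)
          + P (γ t) (η t) (ext Yw t)))) t := by
    intro t
    have h1 := form_deriv (P := fun _ => Ω 0) contDiff_const (hγd t) (hηd t) (hζd t)
    have h2 := (hasDerivAt_id t).mul (form_deriv hP1 (hγd t) (hηd t) (hζd t))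
    refine (h1.add h2).congr_deriv ?_
    simp
  have hzero : ∀ t ∈ Icc (0 : ℝ) 1, HasDerivAt h 0 t := by
    intro t ht
    refine (hhd t).congr_deriv ?_
    have ev1 := congrArg (fun u => Ω 0 u (ζ t)) (hYv' ⟨t, ht⟩)
    have ev2 := congrArg (fun u => Ω 0 u (η t)) (hYw' ⟨t, ht⟩)
    rw [(hΘd _).fderiv, (had _).fderiv, hX, hYv] at ev1
    rw [(hΘd _).fderiv, (had _).fderiv, hX, hYw] at ev2
    have hm := hmem ⟨t, ht⟩
    rw [hX] at hm
    change γ t ∈ _ at hm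
    change (Ω 0) (Yv ⟨t, ht⟩ + t • S (P (γ t) (Yv ⟨t, ht⟩))
      + t • S (fderiv ℝ P (γ t) (η t) (X ⟨t, ht⟩))) (ζ t)
      = Ω 0 (- S (fderiv ℝ α (γ t) (η t))) (ζ t) at ev1
    change (Ω 0) (Yw ⟨t, ht⟩ + t • S (P (γ t) (Yw ⟨t, ht⟩))
      + t • S (fderiv ℝ P (γ t) (ζ t) (X ⟨t, ht⟩))) (η t)
      = Ω 0 (- S (fderiv ℝ α (γ t) (ζ t))) (η t) at ev2
    simp only [map_add, map_smul, map_neg, hS1, add_apply, smul_apply, neg_apply, smul_eq_mul]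
      at ev1 ev2
    rw [ext_of_mem _ ht, ext_of_mem _ ht, ext_of_mem _ ht]
    have e1 := hαP _ hm (η t) (ζ t)
    have e2 := hcl _ hm (X ⟨t, ht⟩) (η t) (ζ t)
    have e3 := fderiv_alt P hP1 Metric.isOpen_ball hPalt hm (η t) (ζ t) (X ⟨t, ht⟩)
    have e4 := halt 0 h0r (η t) (Yw ⟨t, ht⟩)
    have e5 := hPalt _ hm (η t) (Yw ⟨t, ht⟩)
    linear_combination ev1 - ev2 - e1 + t * e2 - t * e3 + e4 + t * e5
  have hconst := constant_of_has_deriv_right_zero (f := h) (a := 0) (b := 1)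
    (fun t _ => (hhd t).continuousAt.continuousWithinAt)
    (fun t ht => (hzero t ⟨ht.1, ht.2.le⟩).hasDerivWithinAt) 1 ⟨zero_le_one, le_rfl⟩
  have hp0 : ∀ c : C(I, E), prim c 0 = 0 := fun c => by simp [prim]
  have g1 : cur z 1 = γ 1 := hX 1
  have g2 : fderiv ℝ cur z v 1 = η 1 := hYv 1
  have g3 : fderiv ℝ cur z w 1 = ζ 1 := hYw 1
  have g4 : h 0 = Ω 0 v w := by simp [hh, hη, hζ, hp0]
  have g5 : h 1 = Ω (γ 1) (η 1) (ζ 1) := by simp [hh, hPdef]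
  rw [← g4, ← hconst, g5, ← g1, ← g2, ← g3]
  rfl
lemma exists_equiv [CompleteSpace E] [CompleteSpace F] (f : E →L[ℝ] F)
    (hf : Function.Bijective f) : ∃ e : E ≃L[ℝ] F, (e : E →L[ℝ] F) = f :=
  ⟨ContinuousLinearEquiv.ofBijective f (LinearMap.ker_eq_bot.2 hf.1)
    (LinearMap.range_eq_top.2 hf.2), by ext; rfl⟩

/-- The Schouten condition at a point, in invariant form. -/
def Schouten (B : E → (E →L[ℝ] ℝ) →L[ℝ] E) (y : E) : Prop :=
  ∀ p q r : E →L[ℝ] ℝ, r (fderiv ℝ B y (B y p) q) + p (fderiv ℝ B y (B y q) r)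
    + q (fderiv ℝ B y (B y r) p) = 0

lemma cutoff [FiniteDimensional ℝ E] (x : E) (r : ℝ) (hr : 0 < r) :
    ∃ ρ : E → E, ContDiff ℝ ∞ ρ ∧ (∀ z, ρ z ∈ Metric.ball x r) ∧
      ∀ z ∈ Metric.ball (0 : E) (r / 3), ρ z = x + z := by
  let χ : ContDiffBump (0 : E) := ⟨r / 3, r / 2, by positivity, by linarith⟩
  refine ⟨fun z => x + χ z • z, contDiff_const.add (χ.contDiff.smul contDiff_id), ?_, ?_⟩
  · intro z
    rw [Metric.mem_ball, dist_eq_norm, add_sub_cancel_left, norm_smul, Real.norm_eq_abs,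
      abs_of_nonneg χ.nonneg]
    rcases lt_or_ge (dist z 0) (r / 2) with h | h
    · rw [dist_zero_right] at h
      have := mul_le_of_le_one_left (norm_nonneg z) (χ.le_one (x := z))
      linarith
    · rw [χ.zero_of_le_dist h, zero_mul]; exact hr
  · intro z hz
    have : χ z = 1 := χ.one_of_mem_closedBall (Metric.ball_subset_closedBall hz)
    simp [this]

lemma darboux [FiniteDimensional ℝ E] (U : Set E) (hU : IsOpen U)
    (B : E → (E →L[ℝ] ℝ) →L[ℝ] E) (hB : ContDiffOn ℝ ∞ B U)
    (hanti : ∀ y ∈ U, ∀ p q : E →L[ℝ] ℝ, q (B y p) = - p (B y q))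
    (hbij : ∀ y ∈ U, Function.Bijective (B y)) (x : E) (hx : x ∈ U)
    (W : Set E) (hW : IsOpen W) (hxW : x ∈ W) (hS : ∀ y ∈ W, Schouten B y) :
    ∃ W' : Set E, IsOpen W' ∧ x ∈ W' ∧ W' ⊆ U ∧ ∃ u : E → E, ContDiffOn ℝ ∞ u W' ∧
      Set.InjOn u W' ∧ IsOpen (u '' W') ∧ (∀ y ∈ W', Function.Bijective (fderiv ℝ u y)) ∧
      ∀ y ∈ W', ∀ p : E →L[ℝ] ℝ, fderiv ℝ u y (B y (p ∘L fderiv ℝ u y)) = B x p := by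
  have : CompleteSpace E := FiniteDimensional.complete ℝ E
  have hne : (∞ : WithTop ℕ∞) ≠ 0 := by simp
  obtain ⟨r, hr, hrUW⟩ := Metric.isOpen_iff.1 (hU.inter hW) x ⟨hx, hxW⟩
  obtain ⟨ρ, hρ, hρmem, hρeq⟩ := cutoff x r hr
  have hρU : ∀ z, ρ z ∈ U := fun z => (hrUW (hρmem z)).1
  have hBρ : ContDiff ℝ ∞ (fun z => B (ρ z)) := by
    rw [← contDiffOn_univ]
    exact hB.comp hρ.contDiffOn (fun z _ => hρU z)
  set Ω : E → E →L[ℝ] E →L[ℝ] ℝ := fun z => ContinuousLinearMap.inverse (B (ρ z)) with hΩdef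
  have hΩ1 : ∀ z a, B (ρ z) (Ω z a) = a := by
    intro z a
    obtain ⟨e, he⟩ := exists_equiv _ (hbij _ (hρU z))
    simp only [hΩdef]
    rw [← he, ContinuousLinearMap.inverse_equiv]
    exact e.apply_symm_apply a
  have hΩ2 : ∀ z p, Ω z (B (ρ z) p) = p := by
    intro z p
    exact (hbij _ (hρU z)).1 (hΩ1 z _)
  have hΩs : ContDiff ℝ ∞ Ω := by
    rw [contDiff_iff_contDiffAt]
    intro z
    obtain ⟨e, he⟩ := exists_equiv _ (hbij _ (hρU z))
    have h1 := contDiffAt_map_inverse (𝕜 := ℝ) (n := ∞) e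
    rw [he] at h1
    exact h1.comp z hBρ.contDiffAt
  have hΩalt : ∀ z a b, Ω z a b = - Ω z b a := by
    intro z a b
    have h := hanti _ (hρU z) (Ω z a) (Ω z b)
    rw [hΩ1, hΩ1] at h
    linarith
  have hr3 : 0 < r / 3 := by positivity
  have hcl : ∀ z ∈ Metric.ball (0 : E) (r / 3), ∀ a b c,
      fderiv ℝ Ω z a b c + fderiv ℝ Ω z b c a + fderiv ℝ Ω z c a b = 0 := by
    intro z hz
    have hρz : ρ z = x + z := hρeq z hz
    have hyUW := hrUW (hρmem z)
    have hBd : HasFDerivAt B (fderiv ℝ B (ρ z)) (ρ z) :=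
      ((hB.contDiffAt (hU.mem_nhds hyUW.1)).differentiableAt hne).hasFDerivAt
    have hρd : HasFDerivAt ρ (ContinuousLinearMap.id ℝ E) z := by
      refine ((hasFDerivAt_id z).const_add x).congr_of_eventuallyEq ?_
      filter_upwards [Metric.isOpen_ball.mem_nhds hz] with w hw using hρeq w hw
    have hBρd : HasFDerivAt (fun z => B (ρ z)) (fderiv ℝ B (ρ z)) z := hBd.comp z hρd
    have hΩd : HasFDerivAt Ω (fderiv ℝ Ω z) z := (hΩs.differentiable hne z).hasFDerivAt
    have hrel : ∀ a b, B (ρ z) (fderiv ℝ Ω z a b) + fderiv ℝ B (ρ z) a (Ω z b) = 0 := by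
      intro a b
      have h1 : HasFDerivAt (fun z => Ω z b) _ z := hΩd.clm_apply (hasFDerivAt_const b z)
      have h2 := hBρd.clm_apply h1
      have h3 : (fun z => B (ρ z) (Ω z b)) = fun _ => b := by funext w; exact hΩ1 w b
      rw [h3] at h2
      have h4 := DFunLike.congr_fun (h2.unique (hasFDerivAt_const b z)) a
      simpa using h4
    have hterm : ∀ a b c, fderiv ℝ Ω z a b c = Ω z c (fderiv ℝ B (ρ z) a (Ω z b)) := by
      intro a b c
      have h1 := hanti _ hyUW.1 (Ω z c) (fderiv ℝ Ω z a b)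
      rw [hΩ1] at h1
      rw [h1, eq_neg_of_add_eq_zero_left (hrel a b), map_neg, neg_neg]
    intro a b c
    have h := hS _ hyUW.2 (Ω z a) (Ω z b) (Ω z c)
    rw [hΩ1, hΩ1, hΩ1] at h
    rw [hterm, hterm, hterm]
    exact h
  have hρ0 : ρ 0 = x := by simpa using hρeq 0 (by simpa using hr3)
  obtain ⟨O, hO, h0O, φ, hφ, hφ0, hφm⟩ := moser Ω hΩs (r / 3) hr3 (fun z _ => hΩalt z) hcl
    (B x) (fun p => by have := hΩ2 0 p; rwa [hρ0] at this)
  have hinj0 : Function.Injective (fderiv ℝ φ 0) := by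
    rw [injective_iff_map_eq_zero]
    intro v hv
    have h1 : Ω 0 v = 0 := by
      ext w
      rw [← (hφm 0 h0O).2 v w, hv]; simp
    rw [← hΩ1 0 v, h1, map_zero]
  have hbij0 : Function.Bijective (fderiv ℝ φ 0) :=
    ⟨hinj0, LinearMap.surjective_of_injective (f := (fderiv ℝ φ 0 : E →ₗ[ℝ] E)) hinj0⟩
  obtain ⟨e0, he0⟩ := exists_equiv _ hbij0
  obtain ⟨e, he, h0e, heO, hed, hes⟩ := smooth_inv hO hφ h0O e0 (by
    rw [he0]
    exact ((hφ.contDiffAt (hO.mem_nhds h0O)).differentiableAt hne).hasFDerivAt)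
  have hW'o : IsOpen ((fun y => y - x) ⁻¹' e.target : Set E) :=
    e.open_target.preimage (by fun_prop)
  have hmain : ∀ y, y - x ∈ e.target → ∃ g : E ≃L[ℝ] E,
      HasFDerivAt φ (g : E →L[ℝ] E) (e.symm (y - x)) ∧
      HasFDerivAt (fun y => e.symm (y - x)) (g.symm : E →L[ℝ] E) y ∧
      e.symm (y - x) ∈ O ∧ φ (e.symm (y - x)) = y - x := by
    intro y hy
    have hsrc := e.map_target hy
    obtain ⟨g, hg⟩ := hed _ hsrc
    have h1 : HasFDerivAt e.symm (g.symm : E →L[ℝ] E) (y - x) :=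
      e.hasFDerivAt_symm hy (by rw [he]; exact hg)
    have h2 : HasFDerivAt (fun y => y - x) (ContinuousLinearMap.id ℝ E) y :=
      (hasFDerivAt_id y).sub_const x
    have h3 : HasFDerivAt (fun y => e.symm (y - x))
        ((g.symm : E →L[ℝ] E) ∘L ContinuousLinearMap.id ℝ E) y :=
      HasFDerivAt.comp (g := e.symm) y h1 h2
    rw [ContinuousLinearMap.comp_id] at h3
    refine ⟨g, hg, h3, heO hsrc, ?_⟩
    have := e.right_inv hy
    rwa [he] at this
  have hρy : ∀ y, y - x ∈ e.target → ρ (y - x) = y := by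
    intro y hy
    obtain ⟨g, -, -, hzO, hz⟩ := hmain y hy
    have := (hφm _ hzO).1
    rw [hz] at this
    rw [hρeq _ this]; abel
  refine ⟨(fun y => y - x) ⁻¹' e.target, hW'o, ?_, ?_, fun y => e.symm (y - x), ?_, ?_, ?_, ?_, ?_⟩
  · have := e.map_source h0e
    rw [he, hφ0] at this
    simpa using this
  · intro y hy
    rw [← hρy y hy]
    exact hρU _
  · exact hes.comp (contDiff_id.sub contDiff_const).contDiffOn (fun y hy => hy)
  · intro y hy y' hy' h
    have := e.symm.injOn hy hy' h
    simpa using this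
  · have : (fun y => e.symm (y - x)) '' ((fun y => y - x) ⁻¹' e.target) = e.source := by
      ext z
      constructor
      · rintro ⟨y, hy, rfl⟩
        exact e.map_target hy
      · intro hz
        refine ⟨x + e z, ?_, ?_⟩
        · simpa using e.map_source hz
        · simpa using e.left_inv hz
    rw [this]
    exact e.open_source
  · intro y hy
    obtain ⟨g, -, hg, -, -⟩ := hmain y hy
    rw [hg.fderiv]
    exact g.symm.bijective
  · intro y hy p
    obtain ⟨g, hgφ, hg, hzO, hz⟩ := hmain y hy
    rw [hg.fderiv]
    set a := B y (p ∘L (g.symm : E →L[ℝ] E)) with ha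
    have h1 : Ω (y - x) a = p ∘L (g.symm : E →L[ℝ] E) := by
      have := hΩ2 (y - x) (p ∘L (g.symm : E →L[ℝ] E))
      rwa [hρy y hy] at this
    have h2 : Ω 0 (g.symm a) = p := by
      ext v
      rw [← (hφm _ hzO).2 (g.symm a) v, hgφ.fderiv, hz]
      simp [h1]
    have h3 := hΩ1 0 (g.symm a)
    rw [h2, hρ0] at h3
    exact h3.symm

lemma schouten_of_const (B : E → (E →L[ℝ] ℝ) →L[ℝ] E) (W : Set E) (hW : IsOpen W)
    (hB : ∀ y ∈ W, DifferentiableAt ℝ B y)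
    (hanti : ∀ y ∈ W, ∀ p q : E →L[ℝ] ℝ, q (B y p) = - p (B y q))
    (u : E → E) (hu : ContDiffOn ℝ ∞ u W) (hbij : ∀ y ∈ W, Function.Bijective (fderiv ℝ u y))
    [CompleteSpace E]
    (c : (E →L[ℝ] ℝ) → (E →L[ℝ] ℝ) → ℝ)
    (hc : ∀ y ∈ W, ∀ p q : E →L[ℝ] ℝ, c p q = q (fderiv ℝ u y (B y (p ∘L fderiv ℝ u y)))) :
    ∀ y ∈ W, Schouten B y := by
  intro y hy
  have hua : ContDiffAt ℝ ∞ u y := hu.contDiffAt (hW.mem_nhds hy)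
  have hsymm : ∀ v w, fderiv ℝ (fderiv ℝ u) y v w = fderiv ℝ (fderiv ℝ u) y w v :=
    hua.isSymmSndFDerivAt (by rw [minSmoothness_of_isRCLikeNormedField]; exact WithTop.coe_le_coe.2 le_top)
  have hDd : HasFDerivAt (fderiv ℝ u) (fderiv ℝ (fderiv ℝ u) y) y :=
    ((hua.fderiv_right (m := ∞) (by simp)).differentiableAt (by simp)).hasFDerivAt
  have hBd := (hB y hy).hasFDerivAt
  set T := fderiv ℝ u y with hT
  set H := fderiv ℝ (fderiv ℝ u) y with hH
  have hkey : ∀ (p q : E →L[ℝ] ℝ) (a : E),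
      q (T (fderiv ℝ B y a (p ∘L T))) = p (H a (B y (q ∘L T))) - q (H a (B y (p ∘L T))) := by
    intro p q a
    have h1 : HasFDerivAt (fun y => p ∘L fderiv ℝ u y)
        ((ContinuousLinearMap.compL ℝ E E ℝ p) ∘L H) y :=
      (ContinuousLinearMap.compL ℝ E E ℝ p).hasFDerivAt.comp y hDd
    have h2 := q.hasFDerivAt.comp y (hDd.clm_apply (hBd.clm_apply h1))
    have h3 : (fun y => q (fderiv ℝ u y (B y (p ∘L fderiv ℝ u y)))) =ᶠ[𝓝 y] fun _ => c p q := by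
      filter_upwards [hW.mem_nhds hy] with z hz using (hc z hz p q).symm
    have h4 := (h2.congr_of_eventuallyEq h3.symm).unique (hasFDerivAt_const (c p q) y)
    have h5 := DFunLike.congr_fun h4 a
    have h6 : q (T (B y (p ∘L H a) + fderiv ℝ B y a (p ∘L T)) + H a (B y (p ∘L T))) = 0 := h5
    have h7 : q (T (B y (p ∘L H a))) = - p (H a (B y (q ∘L T))) :=
      hanti y hy (p ∘L H a) (q ∘L T)
    simp only [map_add] at h6
    linarith
  obtain ⟨e, he⟩ := exists_equiv T (hbij y hy)
  have hfac : ∀ p : E →L[ℝ] ℝ, ∃ w : E →L[ℝ] ℝ, p = w ∘L T := by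
    intro p
    refine ⟨p ∘L (e.symm : E →L[ℝ] E), ?_⟩
    rw [← he]
    ext v
    simp
  intro p q r
  obtain ⟨p, rfl⟩ := hfac p
  obtain ⟨q, rfl⟩ := hfac q
  obtain ⟨r, rfl⟩ := hfac r
  have k1 := hkey q r (B y (p ∘L T))
  have k2 := hkey r p (B y (q ∘L T))
  have k3 := hkey p q (B y (r ∘L T))
  simp only [ContinuousLinearMap.comp_apply]
  rw [k1, k2, k3, hsymm (B y (q ∘L T)) (B y (p ∘L T)), hsymm (B y (r ∘L T)) (B y (p ∘L T)),
    hsymm (B y (r ∘L T)) (B y (q ∘L T))]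
  ring

section glue
variable {n : ℕ}

abbrev pr (i : Fin n) : (Fin n → ℝ) →L[ℝ] ℝ := ContinuousLinearMap.proj i

lemma dual_sum (p : (Fin n → ℝ) →L[ℝ] ℝ) : p = ∑ j, p (Pi.single j 1) • pr j := by
  refine ContinuousLinearMap.ext fun v => ?_
  conv_lhs => rw [← Finset.univ_sum_single v]
  rw [map_sum, _root_.sum_apply]
  refine Finset.sum_congr rfl fun j _ => ?_
  have : (Pi.single j (v j) : Fin n → ℝ) = v j • Pi.single j 1 := by
    rw [← Pi.single_smul, smul_eq_mul, mul_one]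
  rw [this, map_smul]
  simp [mul_comm]

lemma lin_vanish (f : ((Fin n → ℝ) →L[ℝ] ℝ) →ₗ[ℝ] ℝ) (h : ∀ i, f (pr i) = 0) (p) : f p = 0 := by
  rw [dual_sum p, map_sum]
  exact Finset.sum_eq_zero fun i _ => by rw [map_smul, h, smul_zero]

lemma up0 {M : Type*} (a b c : M) : Function.update ![a, b] 0 c = ![c, b] := by
  funext i; fin_cases i <;> rfl

lemma up1 {M : Type*} (a b c : M) : Function.update ![a, b] 1 c = ![a, c] := by
  funext i; fin_cases i <;> rfl

/-- A two-slot multilinear map as a bilinear map. -/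
def bil (v : ((Fin n → ℝ) →L[ℝ] ℝ) [×2]→L[ℝ] ℝ) :
    ((Fin n → ℝ) →L[ℝ] ℝ) →ₗ[ℝ] ((Fin n → ℝ) →L[ℝ] ℝ) →ₗ[ℝ] ℝ :=
  LinearMap.mk₂ ℝ (fun p q => v ![p, q])
    (fun p p' q => by
      have := v.map_update_add ![0, q] 0 p p'
      rwa [up0, up0, up0] at this)
    (fun c p q => by
      have := v.map_update_smul ![0, q] 0 c p
      rwa [up0, up0] at this)
    (fun p q q' => by
      have := v.map_update_add ![p, 0] 1 q q'
      rwa [up1, up1, up1] at this)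
    (fun c p q => by
      have := v.map_update_smul ![p, 0] 1 c q
      rwa [up1, up1] at this)

/-- The elementary maps. -/
def el (j i : Fin n) : ((Fin n → ℝ) →L[ℝ] ℝ) →L[ℝ] (Fin n → ℝ) :=
  (ContinuousLinearMap.apply ℝ ℝ (Pi.single j 1 : Fin n → ℝ)).smulRight (Pi.single i 1)

/-- The anchor map attached to the coefficients. -/
def anc (Vc : Fin n → Fin n → (Fin n → ℝ) → ℝ) (y : Fin n → ℝ) :
    ((Fin n → ℝ) →L[ℝ] ℝ) →L[ℝ] (Fin n → ℝ) := ∑ j, ∑ i, Vc j i y • el j i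

lemma anc_apply (V : (Fin n → ℝ) → (((Fin n → ℝ) →L[ℝ] ℝ) [×2]→L[ℝ] ℝ))
    (Vc : Fin n → Fin n → (Fin n → ℝ) → ℝ)
    (hVc : ∀ i j y, Vc i j y = V y ![pr i, pr j]) (y) (p q : (Fin n → ℝ) →L[ℝ] ℝ) :
    q (anc Vc y p) = V y ![p, q] := by
  have h : V y ![p, q] = bil (V y) p q := rfl
  have hc : ∀ i j, bil (V y) (pr i) (pr j) = Vc i j y := fun i j => (hVc i j y).symm
  rw [h]
  conv_rhs => rw [dual_sum p, dual_sum q]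
  simp only [map_sum, LinearMap.sum_apply, map_smul, LinearMap.smul_apply, hc, anc, el,
    _root_.sum_apply, _root_.smul_apply,
    ContinuousLinearMap.smulRight_apply, ContinuousLinearMap.apply_apply, smul_eq_mul]
  rw [Finset.sum_comm]
  refine Finset.sum_congr rfl fun i _ => ?_
  rw [Finset.mul_sum]
  exact Finset.sum_congr rfl fun j _ => by ring

lemma anc_vec (V : (Fin n → ℝ) → (((Fin n → ℝ) →L[ℝ] ℝ) [×2]→L[ℝ] ℝ))
    (Vc : Fin n → Fin n → (Fin n → ℝ) → ℝ)
    (hVc : ∀ i j y, Vc i j y = V y ![pr i, pr j]) (y) (p : (Fin n → ℝ) →L[ℝ] ℝ) :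
    anc Vc y p = fun i => V y ![p, pr i] := by
  funext i
  exact anc_apply V Vc hVc y p (pr i)

theorem main (U : Set (Fin n → ℝ)) (hU : IsOpen U)
    (V : (Fin n → ℝ) → (((Fin n → ℝ) →L[ℝ] ℝ) [×2]→L[ℝ] ℝ))
    (hV : ContDiffOn ℝ ∞ V U)
    (halt : ∀ y ∈ U, ∀ w : Fin 2 → ((Fin n → ℝ) →L[ℝ] ℝ), ∀ i j, i ≠ j → w i = w j →
      V y w = 0)
    (hmax : ∀ y ∈ U, Function.Bijective
      (fun (w : (Fin n → ℝ) →L[ℝ] ℝ) => (fun i : Fin n =>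
        V y ![w, pr i]) : ((Fin n → ℝ) →L[ℝ] ℝ) → (Fin n → ℝ)))
    (x : Fin n → ℝ) (hx : x ∈ U)
    (Vc : Fin n → Fin n → (Fin n → ℝ) → ℝ)
    (hVc : ∀ i j y, Vc i j y = V y ![pr i, pr j]) :
    (∃ W : Set (Fin n → ℝ), IsOpen W ∧ x ∈ W ∧ W ⊆ U ∧
      ∃ u : (Fin n → ℝ) → (Fin n → ℝ),
        ContDiffOn ℝ ∞ u W ∧ Set.InjOn u W ∧ IsOpen (u '' W) ∧
        (∀ y ∈ W, Function.Bijective (fderiv ℝ u y)) ∧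
        ∃ c : ((Fin n → ℝ) →L[ℝ] ℝ) [×2]→L[ℝ] ℝ,
          ∀ y ∈ W, ∀ w : Fin 2 → ((Fin n → ℝ) →L[ℝ] ℝ),
            c w = V y (fun i => (w i).comp (fderiv ℝ u y))) ↔
      ∃ W : Set (Fin n → ℝ), IsOpen W ∧ x ∈ W ∧
        ∀ y ∈ W, ∀ i j k : Fin n,
          ∑ l : Fin n,
            (Vc l i y * fderiv ℝ (Vc j k) y (Pi.single l 1) +
             Vc l j y * fderiv ℝ (Vc k i) y (Pi.single l 1) +
             Vc l k y * fderiv ℝ (Vc i j) y (Pi.single l 1)) = 0 := by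
  have hne : (∞ : WithTop ℕ∞) ≠ 0 := by simp
  set B := anc Vc with hBdef
  have hBV : ∀ y (p q : (Fin n → ℝ) →L[ℝ] ℝ), q (B y p) = V y ![p, q] := anc_apply V Vc hVc
  have hVcs : ∀ i j, ContDiffOn ℝ ∞ (Vc i j) U := by
    intro i j
    have h : Vc i j = fun y => ContinuousMultilinearMap.apply ℝ
        (fun _ : Fin 2 => (Fin n → ℝ) →L[ℝ] ℝ) ℝ ![pr i, pr j] (V y) := by
      funext y; exact hVc i j y
    rw [h]
    exact (ContinuousLinearMap.contDiff _).comp_contDiffOn hV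
  have hBs : ContDiffOn ℝ ∞ B U := by
    rw [hBdef]
    unfold anc
    exact ContDiffOn.sum fun j _ => ContDiffOn.sum fun i _ => (hVcs j i).smul contDiffOn_const
  have hanti : ∀ y ∈ U, ∀ p q : (Fin n → ℝ) →L[ℝ] ℝ, q (B y p) = - p (B y q) := by
    intro y hy p q
    have hz : ∀ p : (Fin n → ℝ) →L[ℝ] ℝ, p (B y p) = 0 := fun p => by
      rw [hBV]; exact halt y hy ![p, p] 0 1 (by decide) rfl
    have h := hz (p + q)
    simp only [map_add, _root_.add_apply, hz] at h
    linarith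
  have hbij : ∀ y ∈ U, Function.Bijective (B y) := by
    intro y hy
    have h : (B y : ((Fin n → ℝ) →L[ℝ] ℝ) → (Fin n → ℝ)) = fun w => fun i => V y ![w, pr i] := by
      funext w; exact anc_vec V Vc hVc y w
    rw [h]; exact hmax y hy
  have hBd : ∀ y ∈ U, DifferentiableAt ℝ B y := fun y hy =>
    (hBs.contDiffAt (hU.mem_nhds hy)).differentiableAt hne
  have hder : ∀ y ∈ U, ∀ j k v, fderiv ℝ (Vc j k) y v = pr k (fderiv ℝ B y v (pr j)) := by
    intro y hy j k v
    have h1 : Vc j k = fun y => pr k (B y (pr j)) := by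
      funext z; rw [hBV, hVc]
    have h2 := (pr k).hasFDerivAt.comp y ((hBd y hy).hasFDerivAt.clm_apply
      (hasFDerivAt_const (pr j) y))
    have h3 := h2.fderiv
    have h4 : (pr k ∘ fun y => B y (pr j)) = Vc j k := h1.symm
    rw [h4] at h3
    rw [h3]
    simp
  have hsum : ∀ y ∈ U, ∀ i (g : (Fin n → ℝ) →L[ℝ] ℝ),
      ∑ l, Vc l i y * g (Pi.single l 1) = - g (B y (pr i)) := by
    intro y hy i g
    conv_rhs => rw [dual_sum g]
    rw [_root_.sum_apply, ← Finset.sum_neg_distrib]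
    refine Finset.sum_congr rfl fun l _ => ?_
    have := hanti y hy (pr l) (pr i)
    rw [hBV, ← hVc] at this
    rw [this, _root_.smul_apply, smul_eq_mul]
    ring
  have hcoord : ∀ y ∈ U, ∀ i j k : Fin n,
      ∑ l : Fin n,
            (Vc l i y * fderiv ℝ (Vc j k) y (Pi.single l 1) +
             Vc l j y * fderiv ℝ (Vc k i) y (Pi.single l 1) +
             Vc l k y * fderiv ℝ (Vc i j) y (Pi.single l 1)) =
      - (pr k (fderiv ℝ B y (B y (pr i)) (pr j)) + pr i (fderiv ℝ B y (B y (pr j)) (pr k))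
        + pr j (fderiv ℝ B y (B y (pr k)) (pr i))) := by
    intro y hy i j k
    rw [Finset.sum_add_distrib, Finset.sum_add_distrib, hsum y hy, hsum y hy, hsum y hy,
      hder y hy, hder y hy, hder y hy]
    ring
  have hequiv : ∀ y ∈ U, (∀ i j k : Fin n,
      ∑ l : Fin n,
            (Vc l i y * fderiv ℝ (Vc j k) y (Pi.single l 1) +
             Vc l j y * fderiv ℝ (Vc k i) y (Pi.single l 1) +
             Vc l k y * fderiv ℝ (Vc i j) y (Pi.single l 1)) = 0) ↔ Schouten B y := by
    intro y hy
    constructor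
    · intro h
      have h0 : ∀ i j k, (pr k (fderiv ℝ B y (B y (pr i)) (pr j))
          + pr i (fderiv ℝ B y (B y (pr j)) (pr k))
          + pr j (fderiv ℝ B y (B y (pr k)) (pr i))) = 0 := by
        intro i j k
        have := h i j k
        rw [hcoord y hy] at this
        linarith
      have h1 : ∀ p j k, (pr k (fderiv ℝ B y (B y p) (pr j))
          + p (fderiv ℝ B y (B y (pr j)) (pr k))
          + pr j (fderiv ℝ B y (B y (pr k)) p)) = 0 := by
        intro p j k
        exact lin_vanish
          { toFun := fun p => pr k (fderiv ℝ B y (B y p) (pr j))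
              + p (fderiv ℝ B y (B y (pr j)) (pr k))
              + pr j (fderiv ℝ B y (B y (pr k)) p)
            map_add' := fun a b => by
              simp only [map_add, _root_.add_apply]; ring
            map_smul' := fun c a => by
              simp only [map_smul, _root_.smul_apply, smul_eq_mul,
                RingHom.id_apply]; ring } (fun i => h0 i j k) p
      have h2 : ∀ p q k, (pr k (fderiv ℝ B y (B y p) q)
          + p (fderiv ℝ B y (B y q) (pr k))
          + q (fderiv ℝ B y (B y (pr k)) p)) = 0 := by
        intro p q k
        exact lin_vanish
          { toFun := fun q => pr k (fderiv ℝ B y (B y p) q)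
              + p (fderiv ℝ B y (B y q) (pr k))
              + q (fderiv ℝ B y (B y (pr k)) p)
            map_add' := fun a b => by
              simp only [map_add, _root_.add_apply]; ring
            map_smul' := fun c a => by
              simp only [map_smul, _root_.smul_apply, smul_eq_mul,
                RingHom.id_apply]; ring } (fun i => h1 p i k) q
      intro p q r
      exact lin_vanish
          { toFun := fun r => r (fderiv ℝ B y (B y p) q)
              + p (fderiv ℝ B y (B y q) r)
              + q (fderiv ℝ B y (B y r) p)
            map_add' := fun a b => by
              simp only [map_add, _root_.add_apply]; ring
            map_smul' := fun c a => by
              simp only [map_smul, _root_.smul_apply, smul_eq_mul,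
                RingHom.id_apply]; ring } (fun i => h2 p q i) r
    · intro h i j k
      rw [hcoord y hy, h (pr i) (pr j) (pr k), neg_zero]
  constructor
  · rintro ⟨W, hW, hxW, hWU, u, hu, -, -, hub, c, hc⟩
    refine ⟨W, hW, hxW, fun y hy => (hequiv y (hWU hy)).2 ?_⟩
    refine schouten_of_const B W hW (fun y hy => hBd y (hWU hy)) (fun y hy => hanti y (hWU hy))
      u hu hub (fun p q => c ![p, q]) ?_ y hy
    intro y hy p q
    have h1 := hBV y (p.comp (fderiv ℝ u y)) (q.comp (fderiv ℝ u y))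
    have h2 : (fun i => ((![p, q] : Fin 2 → ((Fin n → ℝ) →L[ℝ] ℝ)) i).comp (fderiv ℝ u y))
        = ![p.comp (fderiv ℝ u y), q.comp (fderiv ℝ u y)] := by
      funext i; fin_cases i <;> rfl
    have h3 := hc y hy ![p, q]
    rw [h2, ← h1] at h3
    exact h3
  · rintro ⟨W, hW, hxW, hS⟩
    obtain ⟨W', hW', hxW', hWU, u, hu, hi, ho, hub, hcst⟩ := darboux U hU B hBs hanti hbij x hx
      (W ∩ U) (hW.inter hU) ⟨hxW, hx⟩ (fun y hy => (hequiv y hy.2).1 (hS y hy.1))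
    refine ⟨W', hW', hxW', hWU, u, hu, hi, ho, hub, V x, ?_⟩
    intro y hy w
    have h2 : (fun i => (w i).comp (fderiv ℝ u y))
        = ![(w 0).comp (fderiv ℝ u y), (w 1).comp (fderiv ℝ u y)] := by
      funext i; fin_cases i <;> rfl
    have h4 : w = ![w 0, w 1] := by
      funext i; fin_cases i <;> rfl
    rw [h2, ← hBV, ContinuousLinearMap.comp_apply, hcst y hy, hBV, ← h4]

end glue
end Darboux
end

/-- let `n` be even and let `V` be a smooth bivector field on `U ⊆ ℝⁿ`
of maximal rank `n`, i.e. the map `V♮_y : (ℝⁿ)* → ℝⁿ`, `εⁱ(V♮_y w) = V_y(w, εⁱ)`, is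
bijective for every `y ∈ U`. Then `V` has constant coefficients near `x ∈ U` iff its
Schouten–Nijenhuis bracket with itself vanishes near `x`:
`Σ_l ( V^{li} ∂_l V^{jk} + V^{lj} ∂_l V^{ki} + V^{lk} ∂_l V^{ij} ) = 0`,
where `V^{ij}(y) = V_y(εⁱ, εʲ)`. -/
theorem maximalRank_bivector_constantCoefficients_iff_schouten_zero (n : ℕ)
    (hn : Even n)
    (U : Set (Fin n → ℝ)) (hU : IsOpen U)
    (V : (Fin n → ℝ) → (((Fin n → ℝ) →L[ℝ] ℝ) [×2]→L[ℝ] ℝ))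
    (hV : ContDiffOn ℝ (⊤ : ℕ∞) V U)
    (halt : ∀ y ∈ U, ∀ w : Fin 2 → ((Fin n → ℝ) →L[ℝ] ℝ), ∀ i j, i ≠ j → w i = w j →
      V y w = 0)
    (hmax : ∀ y ∈ U, Function.Bijective
      (fun (w : (Fin n → ℝ) →L[ℝ] ℝ) => (fun i : Fin n =>
        V y ![w, ContinuousLinearMap.proj i]) : ((Fin n → ℝ) →L[ℝ] ℝ) → (Fin n → ℝ)))
    (x : Fin n → ℝ) (hx : x ∈ U)
    (Vc : Fin n → Fin n → (Fin n → ℝ) → ℝ)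
    (hVc : ∀ i j y, Vc i j y =
      V y ![ContinuousLinearMap.proj i, ContinuousLinearMap.proj j]) :
    HasConstantCoefficientsVecAt n 2 U V x ↔
      ∃ W : Set (Fin n → ℝ), IsOpen W ∧ x ∈ W ∧
        ∀ y ∈ W, ∀ i j k : Fin n,
          ∑ l : Fin n,
            (Vc l i y * fderiv ℝ (Vc j k) y (Pi.single l 1) +
             Vc l j y * fderiv ℝ (Vc k i) y (Pi.single l 1) +
             Vc l k y * fderiv ℝ (Vc i j) y (Pi.single l 1)) = 0 := by
  exact Darboux.main U hU V hV halt hmax x hx Vc hVc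
end

section
/- Let n ≥ 2, let V be a smooth (n−1)-vector field on an open set U ⊆ ℝⁿ with V_{x₀} ≠ 0 at a point x₀ ∈ U, and let α be the smooth 1-form on U defined by v ∧ V_y = α_y(v) · (e₁∧⋯∧eₙ) for all v ∈ ℝⁿ, where e₁∧⋯∧eₙ is the standard generator of Λⁿℝⁿ. Then V has constant coefficients on a neighbourhood of x₀ if and only if the following two conditions hold on some open neighbourhood of x₀: (1) there exists a closed nowhere-vanishing smooth 1-form ζ such that for every y one has {w ∈ (ℝⁿ)* : i_wV_y = 0} = ℝ·ζ_y; and (2) there exists a closed smooth 1-form θ with dα + θ ∧ α = 0. -/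
open scoped ContDiff Topology

/-- Determinant of a tuple of covectors. -/
noncomputable def Dd {n : ℕ} (w : Fin n → ((Fin n → ℝ) →L[ℝ] ℝ)) : ℝ :=
  Matrix.det (Matrix.of fun i j => w i (Pi.single j 1))

theorem clm_expand {n : ℕ} (w : (Fin n → ℝ) →L[ℝ] ℝ) (v : Fin n → ℝ) :
    w v = ∑ j, v j * w (Pi.single j 1) := by
  conv_lhs => rw [pi_eq_sum_univ' v]
  simp [map_sum]

theorem Dd_comp {n : ℕ} (w : Fin n → ((Fin n → ℝ) →L[ℝ] ℝ)) (L : (Fin n → ℝ) →L[ℝ] (Fin n → ℝ)) :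
    Dd (fun i => (w i).comp L) = Dd w * Dd (fun i => (ContinuousLinearMap.proj i).comp L) := by
  unfold Dd
  rw [← Matrix.det_mul]
  congr 1
  ext i j
  simp only [Matrix.of_apply, Matrix.mul_apply, ContinuousLinearMap.comp_apply,
    ContinuousLinearMap.proj_apply]
  rw [clm_expand]
  exact Finset.sum_congr rfl fun k _ => mul_comm _ _

theorem Dd_smul_cons {n : ℕ} (t : ℝ) (a : (Fin (n+1) → ℝ) →L[ℝ] ℝ)
    (w : Fin n → ((Fin (n+1) → ℝ) →L[ℝ] ℝ)) :
    Dd (Fin.cons (t • a) w : Fin (n+1) → _) = t * Dd (Fin.cons a w : Fin (n+1) → _) := by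
  unfold Dd
  rw [Matrix.det_succ_row_zero, Matrix.det_succ_row_zero, Finset.mul_sum]
  refine Finset.sum_congr rfl fun j _ => ?_
  have : ∀ b : (Fin (n+1) → ℝ) →L[ℝ] ℝ, (Matrix.of fun i j => (Fin.cons b w : Fin (n+1) → ((Fin (n+1) → ℝ) →L[ℝ] ℝ)) i (Pi.single j 1)).submatrix Fin.succ j.succAbove
      = Matrix.of fun i k => w i (Pi.single (j.succAbove k) 1) := by
    intro b; ext i k; simp
  rw [this, this]
  simp
  ring

theorem Dd_eq_zero {n : ℕ} (w : Fin n → ((Fin n → ℝ) →L[ℝ] ℝ)) {i j : Fin n} (h : i ≠ j)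
    (hw : w i = w j) : Dd w = 0 := by
  unfold Dd
  exact Matrix.det_zero_of_row_eq h (by ext k; simp [hw])

theorem Dd_ne_zero {n : ℕ} (w : Fin n → ((Fin n → ℝ) →L[ℝ] ℝ)) (h : LinearIndependent ℝ w) :
    Dd w ≠ 0 := by
  unfold Dd
  rw [← isUnit_iff_ne_zero, ← Matrix.isUnit_iff_isUnit_det,
    ← Matrix.linearIndependent_rows_iff_isUnit]
  rw [Fintype.linearIndependent_iff] at h ⊢
  intro g hg
  apply h g
  ext v
  rw [clm_expand]
  refine (Finset.sum_congr rfl fun j _ => ?_).trans Finset.sum_const_zero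
  have := congrFun hg j
  simp [Finset.sum_apply, Matrix.row] at this
  simp [this]

theorem bij_of_Dd {n : ℕ} (L : (Fin n → ℝ) →L[ℝ] (Fin n → ℝ))
    (h : Dd (fun i => (ContinuousLinearMap.proj i).comp L) ≠ 0) : Function.Bijective L := by
  have h2 : (LinearMap.toMatrix' (L : (Fin n → ℝ) →ₗ[ℝ] (Fin n → ℝ))).det ≠ 0 := by
    convert h using 1
    unfold Dd
    congr 1
  rw [LinearMap.det_toMatrix'] at h2
  have := (LinearMap.equivOfDetNeZero _ h2).bijective
  exact this

/-- basis of coordinate covectors -/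
noncomputable def projBasis (n : ℕ) : Module.Basis (Fin n) ℝ ((Fin n → ℝ) →L[ℝ] ℝ) :=
  (Pi.basisFun ℝ (Fin n)).dualBasis.map LinearMap.toContinuousLinearMap

theorem projBasis_apply (n : ℕ) (i : Fin n) : projBasis n i = ContinuousLinearMap.proj i := by
  ext v
  simp [projBasis]

theorem extend1 {n : ℕ} (a : (Fin n → ℝ) →L[ℝ] ℝ) (ha : a ≠ 0) : ∀ k : ℕ, k + 1 ≤ n →
    ∃ ws : Fin k → ((Fin n → ℝ) →L[ℝ] ℝ),
      LinearIndependent ℝ (Fin.cons a ws : Fin (k+1) → ((Fin n → ℝ) →L[ℝ] ℝ)) := by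
  intro k
  induction k with
  | zero => 
    intro _
    refine ⟨Fin.elim0, ?_⟩
    have : Subsingleton (Fin (0 + 1)) := inferInstanceAs (Subsingleton (Fin 1))
    exact LinearIndependent.of_subsingleton 0 ha
  | succ k ih =>
    intro hk
    obtain ⟨ws, hws⟩ := ih (by omega)
    obtain ⟨x, hx⟩ := exists_linearIndependent_snoc_of_lt_finrank hws (by
      rw [Module.finrank_eq_card_basis (projBasis n)]; simp; omega)
    refine ⟨Fin.snoc ws x, ?_⟩
    rw [Fin.cons_snoc_eq_snoc_cons]
    exact hx

theorem extend2 {n : ℕ} (a w : (Fin n → ℝ) →L[ℝ] ℝ) (ha : LinearIndependent ℝ ![a, w]) :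
    ∀ k : ℕ, k + 2 ≤ n →
    ∃ ws : Fin k → ((Fin n → ℝ) →L[ℝ] ℝ),
      LinearIndependent ℝ (Fin.cons a (Fin.cons w ws : Fin (k+1) → ((Fin n → ℝ) →L[ℝ] ℝ)) :
        Fin (k+2) → ((Fin n → ℝ) →L[ℝ] ℝ)) := by
  intro k
  induction k with
  | zero => 
    intro _
    refine ⟨Fin.elim0, ?_⟩
    convert ha using 1
    ext i
    fin_cases i <;> rfl
  | succ k ih =>
    intro hk
    obtain ⟨ws, hws⟩ := ih (by omega)
    obtain ⟨x, hx⟩ := exists_linearIndependent_snoc_of_lt_finrank hws (by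
      rw [Module.finrank_eq_card_basis (projBasis n)]; simp; omega)
    refine ⟨Fin.snoc ws x, ?_⟩
    rw [Fin.cons_snoc_eq_snoc_cons, Fin.cons_snoc_eq_snoc_cons]
    exact hx

theorem alt_repr (m : ℕ) (A : ((Fin (m + 2) → ℝ) →L[ℝ] ℝ) [×(m + 1)]→L[ℝ] ℝ)
    (halt : ∀ w : Fin (m + 1) → ((Fin (m + 2) → ℝ) →L[ℝ] ℝ), ∀ i j,
      i ≠ j → w i = w j → A w = 0) (a : (Fin (m + 2) → ℝ) →L[ℝ] ℝ)
    (ha : ∀ v : Fin (m + 2) → ℝ, a v = ∑ i : Fin (m + 2), (-1 : ℝ) ^ (i : ℕ) * v i *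
        A (fun j : Fin (m + 1) => ContinuousLinearMap.proj (i.succAbove j)))
    (w : Fin (m + 1) → ((Fin (m + 2) → ℝ) →L[ℝ] ℝ)) :
    A w = Dd (Fin.cons a w : Fin (m+2) → _) := by
  let A' : ((Fin (m + 2) → ℝ) →L[ℝ] ℝ) [⋀^Fin (m+1)]→ₗ[ℝ] ℝ :=
    { A.toMultilinearMap with
      map_eq_zero_of_eq' := fun v i j h hij => halt v i j hij h }
  have hA' : ∀ w, A' w = A w := fun _ => rfl
  let c : Fin (m+2) → ℝ := fun i => A (fun j : Fin (m + 1) => ContinuousLinearMap.proj (i.succAbove j))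
  let L : Fin (m+2) → ((Fin (m + 2) → ℝ) →L[ℝ] ℝ) →ₗ[ℝ] (Fin (m+1) → ℝ) := fun i =>
    { toFun := fun w k => w (Pi.single (i.succAbove k) 1)
      map_add' := fun _ _ => rfl
      map_smul' := fun _ _ => rfl }
  let B : ((Fin (m + 2) → ℝ) →L[ℝ] ℝ) [⋀^Fin (m+1)]→ₗ[ℝ] ℝ :=
    ∑ i, c i • (Matrix.detRowAlternating).compLinearMap (L i)
  have hB : ∀ w : Fin (m + 1) → ((Fin (m + 2) → ℝ) →L[ℝ] ℝ), B w = ∑ i, c i *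
      Matrix.det (Matrix.of fun j k => w j (Pi.single ((i : Fin (m+2)).succAbove k) 1)) := by
    intro w
    have hs : ∀ s : Finset (Fin (m+2)),
        (∑ i ∈ s, c i • (Matrix.detRowAlternating).compLinearMap (L i)) w = ∑ i ∈ s, c i *
      Matrix.det (Matrix.of fun j k => w j (Pi.single ((i : Fin (m+2)).succAbove k) 1)) := by
      intro s
      induction s using Finset.induction_on with
      | empty => simp
      | insert i s hi ih =>
        rw [Finset.sum_insert hi, Finset.sum_insert hi, AlternatingMap.add_apply, ih]
        rfl
    exact hs _
  have hAB : A' = B := by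
    refine Module.Basis.ext_alternating (projBasis (m+2)) fun v hv => ?_
    obtain ⟨i, hi⟩ : ∃ i, ∀ j, v j ≠ i := by
      by_contra hcon
      push Not at hcon
      have := Fintype.card_le_of_surjective v hcon
      simp at this
    have : ∀ j, ∃ k, i.succAbove k = v j := fun j => Fin.exists_succAbove_eq (hi j)
    choose σ hσ using this
    have hσi : Function.Injective σ := fun a b hab => hv (by rw [← hσ, ← hσ, hab])
    let τ : Equiv.Perm (Fin (m+1)) := Equiv.ofBijective σ (Finite.injective_iff_bijective.mp hσi)
    have hv' : (fun j => projBasis (m+2) (v j)) =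
        (fun j => (ContinuousLinearMap.proj (i.succAbove j) : (Fin (m + 2) → ℝ) →L[ℝ] ℝ)) ∘ τ := by
      funext j
      simp [projBasis_apply, τ, hσ]
    rw [hv', AlternatingMap.map_perm, AlternatingMap.map_perm]
    congr 1
    rw [hB, hA', Finset.sum_eq_single i]
    · rw [show Matrix.of (fun j k => (ContinuousLinearMap.proj (i.succAbove j) : (Fin (m + 2) → ℝ) →L[ℝ] ℝ) (Pi.single (i.succAbove k) 1)) = (1 : Matrix (Fin (m+1)) (Fin (m+1)) ℝ) from ?_]
      · simp [c]
      · ext j k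
        simp [Matrix.one_apply, Pi.single_apply]
    · intro i' _ hne
      obtain ⟨j, hj⟩ := Fin.exists_succAbove_eq hne
      rw [Matrix.det_eq_zero_of_row_eq_zero j, mul_zero]
      intro k
      simp [hj, Fin.ne_succAbove]
    · simp
  rw [← hA', hAB, hB]
  unfold Dd
  rw [Matrix.det_succ_row_zero]
  refine Finset.sum_congr rfl fun j _ => ?_
  have h1 : (Matrix.of fun i j => (Fin.cons a w : Fin (m+2) → ((Fin (m+2) → ℝ) →L[ℝ] ℝ)) i (Pi.single j 1)).submatrix Fin.succ j.succAbove
      = Matrix.of fun i k => w i (Pi.single (j.succAbove k) 1) := by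
    ext i k; simp
  have h2 : a (Pi.single j 1) = (-1)^(j:ℕ) * c j := by
    rw [ha, Finset.sum_eq_single j]
    · simp [c]
    · intro b _ hb; simp [hb]
    · simp
  rw [h1]
  simp only [Matrix.of_apply, Fin.cons_zero, h2]
  rw [← mul_assoc, ← mul_pow]
  simp

theorem ker_alt (m : ℕ) (A : ((Fin (m + 2) → ℝ) →L[ℝ] ℝ) [×(m + 1)]→L[ℝ] ℝ)
    (halt : ∀ w : Fin (m + 1) → ((Fin (m + 2) → ℝ) →L[ℝ] ℝ), ∀ i j,
      i ≠ j → w i = w j → A w = 0) (hA : A ≠ 0) (a : (Fin (m + 2) → ℝ) →L[ℝ] ℝ)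
    (ha : ∀ v : Fin (m + 2) → ℝ, a v = ∑ i : Fin (m + 2), (-1 : ℝ) ^ (i : ℕ) * v i *
        A (fun j : Fin (m + 1) => ContinuousLinearMap.proj (i.succAbove j))) :
    a ≠ 0 ∧ ∀ w : (Fin (m + 2) → ℝ) →L[ℝ] ℝ,
      (∀ ws : Fin m → ((Fin (m + 2) → ℝ) →L[ℝ] ℝ), A (Fin.cons w ws) = 0) ↔ ∃ t : ℝ, w = t • a := by
  have hr := alt_repr m A halt a ha
  have ha0 : a ≠ 0 := by
    rintro rfl
    apply hA
    ext w
    rw [hr]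
    have := Dd_smul_cons 0 0 w
    simpa using this
  refine ⟨ha0, fun w => ⟨fun h => ?_, ?_⟩⟩
  · by_contra hcon
    push Not at hcon
    have hli : LinearIndependent ℝ ![a, w] := by
      rw [LinearIndependent.pair_iff' ha0]
      exact fun t => (hcon t).symm
    obtain ⟨ws, hws⟩ := extend2 a w hli m le_rfl
    exact Dd_ne_zero _ hws ((hr _).symm.trans (h ws))
  · rintro ⟨t, rfl⟩ ws
    rw [hr]
    by_cases ht : t = 0
    · subst ht
      rw [← hr]
      exact A.map_coord_zero 0 (by simp)
    · have h1 : a = t⁻¹ • (t • a) := by rw [smul_smul, inv_mul_cancel₀ ht, one_smul]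
      have h2 := Dd_smul_cons t⁻¹ (t • a) (Fin.cons (t • a) ws : Fin (m+1) → _)
      rw [← h1] at h2
      rw [h2, Dd_eq_zero _ (i := 0) (j := 1) (by simp) (by simp), mul_zero]
theorem exists_primitive {n : ℕ} (l : Fin n) (O : Set (Fin n → ℝ)) (hO : IsOpen O)
    (p₀ : Fin n → ℝ) (hp₀ : p₀ ∈ O) (G : (Fin n → ℝ) → ℝ) (hG : ContDiffOn ℝ ∞ G O) :
    ∃ (h : (Fin n → ℝ) → ℝ) (O' : Set (Fin n → ℝ)), IsOpen O' ∧ p₀ ∈ O' ∧ O' ⊆ O ∧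
      ContDiff ℝ ∞ h ∧ ∀ p ∈ O', fderiv ℝ h p (Pi.single l 1) = G p := by
  obtain ⟨R, hR, hRO⟩ := Metric.nhds_basis_closedBall.mem_iff.mp (hO.mem_nhds hp₀)
  let χ : ContDiffBump p₀ := ⟨R / 2, R, by positivity, by linarith⟩
  let G1 : (Fin n → ℝ) → ℝ := fun p => χ p * G p
  have hG1 : ContDiff ℝ ∞ G1 := by
    rw [contDiff_iff_contDiffAt]
    intro p
    by_cases hp : p ∈ Metric.closedBall p₀ R
    · exact χ.contDiffAt.mul (hG.contDiffAt (hO.mem_nhds (hRO hp)))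
    · have : G1 =ᶠ[𝓝 p] fun _ => 0 := by
        filter_upwards [Metric.isClosed_closedBall.isOpen_compl.mem_nhds hp] with q hq
        have : χ q = 0 := χ.zero_of_le_dist (by
          have hq' : ¬ dist q p₀ ≤ R := hq
          exact (not_le.mp hq').le)
        simp [G1, this]
      exact contDiffAt_const.congr_of_eventuallyEq this
  have hz : ∀ p : Fin n → ℝ, ∀ s : ℝ, s ∉ Metric.closedBall (p₀ l) R →
      G1 (Function.update p l s) = 0 := by
    intro p s hs
    have : χ (Function.update p l s) = 0 := χ.zero_of_le_dist (by
      have hq' : ¬ dist s (p₀ l) ≤ R := hs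
      have h1 := dist_le_pi_dist (Function.update p l s) p₀ l
      simp only [Function.update_self] at h1
      exact (not_le.mp hq').le.trans h1)
    simp [G1, this]
  let H : ℝ → ℝ := Set.indicator (Set.Ici 0) 1
  have hH : MeasureTheory.LocallyIntegrable H := by
    have : MeasureTheory.LocallyIntegrable (1 : ℝ → ℝ) := MeasureTheory.locallyIntegrable_const _
    exact this.indicator measurableSet_Ici
  have hup : ContDiff ℝ ∞ (fun q : (Fin n → ℝ) × ℝ => Function.update q.1 l q.2) := by
    rw [contDiff_pi]
    intro i
    by_cases hi : i = l
    · subst hi; simp only [Function.update_self]; fun_prop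
    · simp only [Function.update_of_ne hi]; fun_prop
  have hc := MeasureTheory.contDiffOn_convolution_right_with_param (𝕜 := ℝ) (μ := MeasureTheory.volume) (n := ⊤)
    (ContinuousLinearMap.mul ℝ ℝ) (g := fun (p : Fin n → ℝ) (s : ℝ) => G1 (Function.update p l s))
    (s := Set.univ) isOpen_univ (isCompact_closedBall (p₀ l) R) (fun p s _ hs => hz p s hs) hH
    ((hG1.comp hup).contDiffOn)
  rw [Set.univ_prod_univ, contDiffOn_univ] at hc
  have hcp : ContDiff ℝ ∞ (fun p : Fin n → ℝ => (p, p l)) := by fun_prop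
  have hh := hc.comp hcp
  refine ⟨_, Metric.ball p₀ (R / 2), Metric.isOpen_ball, Metric.mem_ball_self (by positivity),
    (Metric.ball_subset_closedBall.trans (Metric.closedBall_subset_closedBall (by linarith))).trans hRO,
    hh, ?_⟩
  intro p hp
  have hd := (hh.differentiable (by simp) p).hasFDerivAt
  set h := (fun q : (Fin n → ℝ) × ℝ =>
      (MeasureTheory.convolution H (fun s => G1 (Function.update q.1 l s))
        (ContinuousLinearMap.mul ℝ ℝ) MeasureTheory.volume) q.2) ∘ fun p => (p, p l) with hdef
  have hγc : Continuous (fun s : ℝ => G1 (Function.update p l s)) :=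
    hG1.continuous.comp (continuous_const.update l continuous_id)
  have hγi : MeasureTheory.Integrable (fun s : ℝ => G1 (Function.update p l s)) :=
    hγc.integrable_of_hasCompactSupport
      (HasCompactSupport.intro (isCompact_closedBall (p₀ l) R) (fun s hs => hz p s hs))
  have key : ∀ x : ℝ, h (Function.update p l x) =
      (∫ s in Set.Iic (p l), G1 (Function.update p l s)) +
        ∫ s in (p l)..x, G1 (Function.update p l s) := by
    intro x
    rw [← intervalIntegral.integral_Iic_sub_Iic hγi.integrableOn hγi.integrableOn]
    rw [add_sub_cancel]
    simp only [hdef, Function.comp, Function.update_self, Function.update_idem,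
      MeasureTheory.convolution, ContinuousLinearMap.mul_apply']
    rw [← MeasureTheory.integral_sub_left_eq_self _ _ x, ← MeasureTheory.integral_indicator measurableSet_Iic]
    congr 1
    ext s
    by_cases hs : s ≤ x
    · simp [H, Set.indicator, hs]
    · simp [H, Set.indicator, hs]
  have hder : HasDerivAt (fun x => h (Function.update p l x)) (G1 (Function.update p l (p l))) (p l) := by
    simp_rw [key]
    exact (intervalIntegral.integral_hasDerivAt_right (hγc.intervalIntegrable _ _)
      hγc.stronglyMeasurable.stronglyMeasurableAtFilter hγc.continuousAt).const_add _
  have hupd : HasDerivAt (fun x => Function.update p l x) (Pi.single l 1) (p l) := hasDerivAt_update p l (p l)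
  have hd' : HasFDerivAt h (fderiv ℝ h p) (Function.update p l (p l)) := by
    rw [Function.update_eq_self]; exact hd
  have := (hd'.comp_hasDerivAt (p l) hupd).unique hder
  rw [this, Function.update_eq_self]
  simp only [G1]
  rw [χ.one_of_mem_closedBall (Metric.ball_subset_closedBall hp), one_mul]

theorem Dd_contDiffOn {n : ℕ} {W : Set (Fin n → ℝ)} (w : (Fin n → ℝ) → Fin n → ((Fin n → ℝ) →L[ℝ] ℝ))
    (hw : ∀ i, ContDiffOn ℝ ∞ (fun y => w y i) W) : ContDiffOn ℝ ∞ (fun y => Dd (w y)) W := by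
  unfold Dd
  simp only [Matrix.det_apply, Matrix.of_apply]
  refine ContDiffOn.sum fun σ _ => ?_
  refine ContDiffOn.const_smul _ ?_
  refine contDiffOn_prod fun i _ => ?_
  exact (hw _).clm_apply contDiffOn_const

/-- continuous linear equivalence from nonvanishing determinant -/
theorem exists_equiv_of_Dd {n : ℕ} (L : (Fin n → ℝ) →L[ℝ] (Fin n → ℝ))
    (h : Dd (fun i => (ContinuousLinearMap.proj i).comp L) ≠ 0) :
    ∃ e : (Fin n → ℝ) ≃L[ℝ] (Fin n → ℝ), (e : (Fin n → ℝ) →L[ℝ] (Fin n → ℝ)) = L := by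
  have hb := bij_of_Dd L h
  refine ⟨ContinuousLinearEquiv.ofBijective L (LinearMap.ker_eq_bot.mpr hb.1)
    (LinearMap.range_eq_top.mpr hb.2), ?_⟩
  ext; simp

theorem Dd_update {n : ℕ} (l : Fin n) (b : (Fin n → ℝ) →L[ℝ] ℝ) :
    Dd (fun i => (ContinuousLinearMap.proj i).comp
      (ContinuousLinearMap.pi (Function.update (fun i => ContinuousLinearMap.proj i) l b))) =
      b (Pi.single l 1) := by
  unfold Dd
  have : (Matrix.of fun i j => ((ContinuousLinearMap.proj i : (Fin n → ℝ) →L[ℝ] ℝ).comp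
      (ContinuousLinearMap.pi (Function.update (fun i => ContinuousLinearMap.proj i) l b)))
        (Pi.single j 1)) =
      (1 : Matrix (Fin n) (Fin n) ℝ).updateRow l (∑ k, b (Pi.single k 1) • (1 : Matrix (Fin n) (Fin n) ℝ) k) := by
    ext i j
    by_cases hi : i = l
    · subst hi
      simp [Matrix.one_apply, Finset.sum_apply]
    · simp [hi, Matrix.one_apply, Pi.single_apply]
  rw [this, Matrix.det_updateRow_sum]
  simp

theorem normal_form (m : ℕ) (W : Set (Fin (m + 2) → ℝ)) (hW : IsOpen W) (x₀ : Fin (m + 2) → ℝ)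
    (hx₀ : x₀ ∈ W) (ζ : (Fin (m + 2) → ℝ) → ((Fin (m + 2) → ℝ) →L[ℝ] ℝ))
    (hζ : ContDiffOn ℝ ∞ ζ W) (hζ0 : ζ x₀ ≠ 0)
    (hcl : ∀ y ∈ W, ∀ a b : Fin (m + 2) → ℝ, fderiv ℝ ζ y a b = fderiv ℝ ζ y b a)
    (f : (Fin (m + 2) → ℝ) → ℝ) (hf : ContDiffOn ℝ ∞ f W) (hf0 : ∀ y ∈ W, f y ≠ 0) :
    ∃ W' : Set (Fin (m + 2) → ℝ), IsOpen W' ∧ x₀ ∈ W' ∧ W' ⊆ W ∧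
      ∃ u : (Fin (m + 2) → ℝ) → (Fin (m + 2) → ℝ), ContDiffOn ℝ ∞ u W' ∧ Set.InjOn u W' ∧
        IsOpen (u '' W') ∧ ∀ y ∈ W',
          f y * Dd (fun i => (ContinuousLinearMap.proj i).comp (fderiv ℝ u y)) = 1 ∧
          (ContinuousLinearMap.proj 0).comp (fderiv ℝ u y) = ζ y := by
  obtain ⟨r, hr, hrW⟩ := Metric.isOpen_iff.mp hW x₀ hx₀
  set B := Metric.ball x₀ r with hB
  have hBo : IsOpen B := Metric.isOpen_ball
  have hxB : x₀ ∈ B := Metric.mem_ball_self hr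
  have hζB := hζ.mono hrW
  obtain ⟨z, hz⟩ := (convex_ball x₀ r).exists_forall_hasFDerivAt_of_fderiv_symmetric hBo
    (hζB.differentiableOn (by simp)) (fun a ha => hcl a (hrW ha))
  have hzs : ContDiffOn ℝ ∞ z B := by
    rw [contDiffOn_infty_iff_fderiv_of_isOpen hBo]
    refine ⟨fun y hy => (hz y hy).differentiableAt.differentiableWithinAt, ?_⟩
    exact hζB.congr fun y hy => (hz y hy).fderiv
  obtain ⟨ℓ, hℓ⟩ := extend1 (ζ x₀) hζ0 (m+1) le_rfl
  let φ : (Fin (m + 2) → ℝ) → (Fin (m + 2) → ℝ) := fun x => Fin.cons (z x) (fun j => ℓ j x)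
  let Dφ : (Fin (m + 2) → ℝ) → ((Fin (m + 2) → ℝ) →L[ℝ] (Fin (m + 2) → ℝ)) := fun y =>
    ContinuousLinearMap.pi (Fin.cons (ζ y) ℓ : Fin (m+2) → ((Fin (m + 2) → ℝ) →L[ℝ] ℝ))
  have hDφ : ∀ y ∈ B, HasFDerivAt φ (Dφ y) y := by
    intro y hy
    rw [hasFDerivAt_pi']
    intro i
    refine Fin.cases ?_ (fun j => ?_) i
    · exact hz y hy
    · exact (ℓ j).hasFDerivAt
  have hφs : ContDiffOn ℝ ∞ φ B := by
    rw [contDiffOn_pi]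
    intro i
    refine Fin.cases ?_ (fun j => ?_) i
    · exact hzs
    · exact (ℓ j).contDiff.contDiffOn
  let d : (Fin (m + 2) → ℝ) → ℝ := fun y => Dd (Fin.cons (ζ y) ℓ : Fin (m+2) → ((Fin (m + 2) → ℝ) →L[ℝ] ℝ))
  have hd : ContDiffOn ℝ ∞ d B := by
    apply Dd_contDiffOn
    intro i
    refine Fin.cases ?_ (fun j => ?_) i
    · exact hζB
    · exact contDiffOn_const
  have hdD : ∀ y, Dd (fun i => (ContinuousLinearMap.proj i).comp (Dφ y)) = d y := fun y => rfl
  have hd0 : d x₀ ≠ 0 := Dd_ne_zero _ hℓ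
  obtain ⟨e, he⟩ := exists_equiv_of_Dd (Dφ x₀) hd0
  have hφx : ContDiffAt ℝ ∞ φ x₀ := hφs.contDiffAt (hBo.mem_nhds hxB)
  have hφe : HasFDerivAt φ (e : (Fin (m + 2) → ℝ) →L[ℝ] (Fin (m + 2) → ℝ)) x₀ := by
    rw [he]; exact hDφ x₀ hxB
  let Φ := hφx.toOpenPartialHomeomorph φ hφe (by simp)
  have hΦ : (Φ : (Fin (m + 2) → ℝ) → (Fin (m + 2) → ℝ)) = φ := rfl
  have hxΦ : x₀ ∈ Φ.source := hφx.mem_toOpenPartialHomeomorph_source hφe (by simp)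
  let B1 : Set (Fin (m + 2) → ℝ) := B ∩ d ⁻¹' {0}ᶜ
  have hB1 : IsOpen B1 := hd.continuousOn.isOpen_inter_preimage hBo isOpen_compl_singleton
  let O : Set (Fin (m + 2) → ℝ) := Φ.target ∩ Φ.symm ⁻¹' B1
  have hO : IsOpen O := Φ.isOpen_inter_preimage_symm hB1
  have hpO : φ x₀ ∈ O := ⟨Φ.map_source hxΦ, by
    change Φ.symm (Φ x₀) ∈ B1
    rw [Φ.left_inv hxΦ]; exact ⟨hxB, hd0⟩⟩
  have hψ : ContDiffOn ℝ ∞ Φ.symm O := by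
    intro p hp
    obtain ⟨e', he'⟩ := exists_equiv_of_Dd (Dφ (Φ.symm p)) hp.2.2
    refine (Φ.contDiffAt_symm hp.1 (f₀' := e') ?_ ?_).contDiffWithinAt
    · rw [he']; exact hDφ _ hp.2.1
    · exact hφs.contDiffAt (hBo.mem_nhds hp.2.1)
  let G : (Fin (m + 2) → ℝ) → ℝ := fun p => (f (Φ.symm p) * d (Φ.symm p))⁻¹
  have hG : ContDiffOn ℝ ∞ G O := by
    refine ContDiffOn.inv (((hf.mono hrW).comp hψ fun p hp => hp.2.1).mul
      (hd.comp hψ fun p hp => hp.2.1)) fun p hp => ?_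
    exact mul_ne_zero (hf0 _ (hrW hp.2.1)) hp.2.2
  obtain ⟨h, O', hO', hpO', hO'O, hh, hhG⟩ := exists_primitive (Fin.last (m+1)) O hO (φ x₀) hpO G hG
  let H : (Fin (m + 2) → ℝ) → (Fin (m + 2) → ℝ) := fun p => Function.update p (Fin.last (m+1)) (h p)
  let DH : (Fin (m + 2) → ℝ) → ((Fin (m + 2) → ℝ) →L[ℝ] (Fin (m + 2) → ℝ)) := fun p =>
    ContinuousLinearMap.pi (Function.update (fun i => ContinuousLinearMap.proj i) (Fin.last (m+1))
      (fderiv ℝ h p))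
  have hDH : ∀ p, HasFDerivAt H (DH p) p := by
    intro p
    rw [hasFDerivAt_pi']
    intro i
    by_cases hi : i = Fin.last (m+1)
    · subst hi
      simp only [H, DH, Function.update_self]
      convert (hh.differentiable (by simp) p).hasFDerivAt using 1
      ext; simp
    · simp only [H, DH, Function.update_of_ne hi]
      have hp : (ContinuousLinearMap.proj i : (Fin (m + 2) → ℝ) →L[ℝ] ℝ).comp
          (ContinuousLinearMap.pi (Function.update (fun i => ContinuousLinearMap.proj i)
            (Fin.last (m+1)) (fderiv ℝ h p))) = ContinuousLinearMap.proj i := by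
        ext; simp [hi]
      rw [hp]
      exact (ContinuousLinearMap.proj i : (Fin (m + 2) → ℝ) →L[ℝ] ℝ).hasFDerivAt
  have hHs : ContDiff ℝ ∞ H := by
    rw [contDiff_pi]
    intro i
    by_cases hi : i = Fin.last (m+1)
    · subst hi; simp only [H, Function.update_self]; exact hh
    · simp only [H, Function.update_of_ne hi]; fun_prop
  let B2 : Set (Fin (m + 2) → ℝ) := B1 ∩ (Φ.source ∩ Φ ⁻¹' O')
  have hB2 : IsOpen B2 := hB1.inter (Φ.isOpen_inter_preimage hO')
  have hxB2 : x₀ ∈ B2 := ⟨⟨hxB, hd0⟩, hxΦ, hpO'⟩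
  have hDu : ∀ y ∈ B2, HasFDerivAt (H ∘ φ) ((DH (φ y)).comp (Dφ y)) y := fun y hy =>
    (hDH (φ y)).comp y (hDφ y hy.1.1)
  have hus : ContDiffOn ℝ ∞ (H ∘ φ) B2 := hHs.comp_contDiffOn (hφs.mono fun y hy => hy.1.1)
  have hdet : ∀ y ∈ B2, f y * Dd (fun i => (ContinuousLinearMap.proj i).comp (fderiv ℝ (H ∘ φ) y)) = 1 := by
    intro y hy
    rw [(hDu y hy).fderiv]
    have := Dd_comp (fun i => (ContinuousLinearMap.proj i).comp (DH (φ y))) (Dφ y)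
    rw [Dd_update, hdD, hhG (φ y) hy.2.2] at this
    have h2 : G (φ y) = (f y * d y)⁻¹ := by
      have : Φ.symm (φ y) = y := Φ.left_inv hy.2.1
      simp only [G, this]
    rw [h2] at this
    have hfy := hf0 y (hrW hy.1.1)
    have hdy : d y ≠ 0 := hy.1.2
    have h3 : Dd (fun i => (ContinuousLinearMap.proj i).comp ((DH (φ y)).comp (Dφ y)))
      = (f y * d y)⁻¹ * d y := this
    rw [h3]
    field_simp
  have hux : ContDiffAt ℝ ∞ (H ∘ φ) x₀ := hus.contDiffAt (hB2.mem_nhds hxB2)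
  obtain ⟨e', he'⟩ := exists_equiv_of_Dd (fderiv ℝ (H ∘ φ) x₀)
    (right_ne_zero_of_mul_eq_one (hdet x₀ hxB2))
  have hue : HasFDerivAt (H ∘ φ) (e' : (Fin (m + 2) → ℝ) →L[ℝ] (Fin (m + 2) → ℝ)) x₀ := by
    rw [he']; exact (hDu x₀ hxB2).differentiableAt.hasFDerivAt
  let Ψ := hux.toOpenPartialHomeomorph (H ∘ φ) hue (by simp)
  have hxΨ : x₀ ∈ Ψ.source := hux.mem_toOpenPartialHomeomorph_source hue (by simp)
  refine ⟨B2 ∩ Ψ.source, hB2.inter Ψ.open_source, ⟨hxB2, hxΨ⟩, fun y hy => hrW hy.1.1.1,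
    H ∘ φ, hus.mono Set.inter_subset_left, Ψ.injOn.mono Set.inter_subset_right,
    Ψ.isOpen_image_of_subset_source (hB2.inter Ψ.open_source) Set.inter_subset_right,
    fun y hy => ⟨hdet y hy.1, ?_⟩⟩
  rw [(hDu y hy.1).fderiv]
  ext v
  have h0 : (0 : Fin (m+2)) ≠ Fin.last (m+1) := by
    intro h; simpa using congrArg Fin.val h
  simp [DH, Dφ, h0]

theorem exists_factor {n : ℕ} (W : Set (Fin n → ℝ))
    (α ζ : (Fin n → ℝ) → ((Fin n → ℝ) →L[ℝ] ℝ)) (hα : ContDiffOn ℝ ∞ α W)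
    (hζ : ContDiffOn ℝ ∞ ζ W) (hα0 : ∀ y ∈ W, α y ≠ 0) (hζ0 : ∀ y ∈ W, ζ y ≠ 0)
    (h : ∀ y ∈ W, ∃ t : ℝ, α y = t • ζ y) :
    ∃ f : (Fin n → ℝ) → ℝ, ContDiffOn ℝ ∞ f W ∧ ∀ y ∈ W, f y ≠ 0 ∧ α y = f y • ζ y := by
  have hpos : ∀ y ∈ W, ∑ i, ζ y (Pi.single i 1) * ζ y (Pi.single i 1) ≠ 0 := by
    intro y hy hs
    rw [Finset.sum_eq_zero_iff_of_nonneg (fun i _ => mul_self_nonneg _)] at hs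
    apply hζ0 y hy
    ext v
    rw [clm_expand]
    refine (Finset.sum_congr rfl fun j _ => ?_).trans Finset.sum_const_zero
    rw [mul_self_eq_zero.mp (hs j (Finset.mem_univ _)), mul_zero]
  refine ⟨fun y => (∑ i, α y (Pi.single i 1) * ζ y (Pi.single i 1)) /
    ∑ i, ζ y (Pi.single i 1) * ζ y (Pi.single i 1), ?_, ?_⟩
  · refine ContDiffOn.div (ContDiffOn.sum fun i _ => ?_) (ContDiffOn.sum fun i _ => ?_) hpos
    · exact (hα.clm_apply contDiffOn_const).mul (hζ.clm_apply contDiffOn_const)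
    · exact (hζ.clm_apply contDiffOn_const).mul (hζ.clm_apply contDiffOn_const)
  · intro y hy
    obtain ⟨t, ht⟩ := h y hy
    have : (∑ i, α y (Pi.single i 1) * ζ y (Pi.single i 1)) /
        ∑ i, ζ y (Pi.single i 1) * ζ y (Pi.single i 1) = t := by
      rw [div_eq_iff (hpos y hy), Finset.mul_sum, ht]
      refine Finset.sum_congr rfl fun i _ => ?_
      simp [mul_assoc]
    simp only [this]
    refine ⟨?_, ht⟩
    rintro rfl
    exact hα0 y hy (by simp [ht])

theorem symm_snd {n : ℕ} {W : Set (Fin n → ℝ)} (hW : IsOpen W) (g : (Fin n → ℝ) → ℝ)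
    (hg : ContDiffOn ℝ ∞ g W) (y : Fin n → ℝ) (hy : y ∈ W) (a b : Fin n → ℝ) :
    fderiv ℝ (fderiv ℝ g) y a b = fderiv ℝ (fderiv ℝ g) y b a := by
  have h := hg.contDiffAt (hW.mem_nhds hy)
  exact (h.isSymmSndFDerivAt (by
    simp only [minSmoothness_of_isRCLikeNormedField]
    exact WithTop.coe_le_coe.mpr le_top)) a b

/-- The theorem in a form with the kernel condition already reduced to the `1`-form. -/
theorem exists_theta {n : ℕ} {W : Set (Fin n → ℝ)} (hW : IsOpen W)
    (α ζ : (Fin n → ℝ) → ((Fin n → ℝ) →L[ℝ] ℝ)) (hζ : ContDiffOn ℝ ∞ ζ W)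
    (hcl : ∀ y ∈ W, ∀ a b : Fin n → ℝ, fderiv ℝ ζ y a b = fderiv ℝ ζ y b a)
    (f : (Fin n → ℝ) → ℝ) (hf : ContDiffOn ℝ ∞ f W) (hf0 : ∀ y ∈ W, f y ≠ 0 ∧ α y = f y • ζ y) :
    ∃ θ : (Fin n → ℝ) → ((Fin n → ℝ) →L[ℝ] ℝ),
          ContDiffOn ℝ ∞ θ W ∧
          (∀ y ∈ W, ∀ a b : Fin n → ℝ, fderiv ℝ θ y a b = fderiv ℝ θ y b a) ∧
          (∀ y ∈ W, ∀ a b : Fin n → ℝ,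
            (fderiv ℝ α y a b - fderiv ℝ α y b a) +
              (θ y a * α y b - θ y b * α y a) = 0) := by
  have hlog : ContDiffOn ℝ ∞ (fun y => - Real.log (f y)) W :=
    (hf.log fun y hy => (hf0 y hy).1).neg
  refine ⟨fderiv ℝ (fun y => - Real.log (f y)),
    ((contDiffOn_infty_iff_fderiv_of_isOpen hW).mp hlog).2, symm_snd hW _ hlog, ?_⟩
  intro y hy a b
  have hfd : HasFDerivAt f (fderiv ℝ f y) y :=
    ((hf.differentiableOn (by simp)).differentiableAt (hW.mem_nhds hy)).hasFDerivAt
  have hζd : HasFDerivAt ζ (fderiv ℝ ζ y) y :=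
    ((hζ.differentiableOn (by simp)).differentiableAt (hW.mem_nhds hy)).hasFDerivAt
  have hαe : α =ᶠ[𝓝 y] fun x => f x • ζ x := by
    filter_upwards [hW.mem_nhds hy] with x hx using (hf0 x hx).2
  have h1 := hαe.fderiv_eq.trans (hfd.smul hζd).fderiv
  have h2 : fderiv ℝ (fun y => - Real.log (f y)) y = -((f y)⁻¹ • fderiv ℝ f y) :=
    (hfd.log (hf0 y hy).1).neg.fderiv
  have hfy := (hf0 y hy).1
  rw [h1, h2, (hf0 y hy).2]
  simp only [_root_.add_apply, _root_.smul_apply, smul_eq_mul,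
    ContinuousLinearMap.smulRight_apply, _root_.neg_apply]
  rw [hcl y hy a b]
  field_simp
  ring

theorem codimOneVector_constantCoefficients_iff (m : ℕ)
    (U : Set (Fin (m + 2) → ℝ)) (hU : IsOpen U)
    (V : (Fin (m + 2) → ℝ) → (((Fin (m + 2) → ℝ) →L[ℝ] ℝ) [×(m + 1)]→L[ℝ] ℝ))
    (hV : ContDiffOn ℝ (⊤ : ℕ∞) V U)
    (halt : ∀ y ∈ U, ∀ w : Fin (m + 1) → ((Fin (m + 2) → ℝ) →L[ℝ] ℝ), ∀ i j,
      i ≠ j → w i = w j → V y w = 0)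
    (x₀ : Fin (m + 2) → ℝ) (hx₀ : x₀ ∈ U) (hx0 : V x₀ ≠ 0)
    (α : (Fin (m + 2) → ℝ) → ((Fin (m + 2) → ℝ) →L[ℝ] ℝ))
    (hα : ∀ y : Fin (m + 2) → ℝ, ∀ v : Fin (m + 2) → ℝ,
      α y v = ∑ i : Fin (m + 2), (-1 : ℝ) ^ (i : ℕ) * v i *
        V y (fun j : Fin (m + 1) => ContinuousLinearMap.proj (i.succAbove j))) :
    HasConstantCoefficientsVecAt (m + 2) (m + 1) U V x₀ ↔
      ∃ W : Set (Fin (m + 2) → ℝ), IsOpen W ∧ x₀ ∈ W ∧ W ⊆ U ∧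
        (∃ ζ : (Fin (m + 2) → ℝ) → ((Fin (m + 2) → ℝ) →L[ℝ] ℝ),
          ContDiffOn ℝ (⊤ : ℕ∞) ζ W ∧
          (∀ y ∈ W, ζ y ≠ 0) ∧
          (∀ y ∈ W, ∀ a b : Fin (m + 2) → ℝ,
            fderiv ℝ ζ y a b = fderiv ℝ ζ y b a) ∧
          (∀ y ∈ W, ∀ w : (Fin (m + 2) → ℝ) →L[ℝ] ℝ,
            (∀ ws : Fin m → ((Fin (m + 2) → ℝ) →L[ℝ] ℝ), V y (Fin.cons w ws) = 0) ↔
              (∃ t : ℝ, w = t • ζ y))) ∧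
        (∃ θ : (Fin (m + 2) → ℝ) → ((Fin (m + 2) → ℝ) →L[ℝ] ℝ),
          ContDiffOn ℝ (⊤ : ℕ∞) θ W ∧
          (∀ y ∈ W, ∀ a b : Fin (m + 2) → ℝ,
            fderiv ℝ θ y a b = fderiv ℝ θ y b a) ∧
          (∀ y ∈ W, ∀ a b : Fin (m + 2) → ℝ,
            (fderiv ℝ α y a b - fderiv ℝ α y b a) +
              (θ y a * α y b - θ y b * α y a) = 0)) := by
  have hαs : ContDiffOn ℝ ∞ α U := by
    have : α = fun y => ∑ i : Fin (m + 2), ((-1 : ℝ) ^ (i : ℕ) *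
        V y (fun j : Fin (m + 1) => ContinuousLinearMap.proj (i.succAbove j))) •
          (ContinuousLinearMap.proj i : (Fin (m + 2) → ℝ) →L[ℝ] ℝ) := by
      funext y
      refine ContinuousLinearMap.ext fun v => ?_
      rw [hα, sum_apply]
      refine Finset.sum_congr rfl fun i _ => ?_
      simp only [_root_.smul_apply, ContinuousLinearMap.proj_apply, smul_eq_mul]
      ring
    rw [this]
    refine ContDiffOn.sum fun i _ => ?_
    suffices hVi : ContDiffOn ℝ ∞ (fun y => (-1 : ℝ) ^ (i : ℕ) *
        V y (fun j : Fin (m + 1) => ContinuousLinearMap.proj (i.succAbove j))) U by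
      exact hVi.smul contDiffOn_const
    refine ContDiffOn.mul contDiffOn_const ?_
    let ev : (((Fin (m + 2) → ℝ) →L[ℝ] ℝ) [×(m + 1)]→L[ℝ] ℝ) →L[ℝ] ℝ :=
      ContinuousMultilinearMap.apply ℝ (fun _ : Fin (m+1) => ((Fin (m + 2) → ℝ) →L[ℝ] ℝ)) ℝ
        (fun j : Fin (m + 1) => ContinuousLinearMap.proj (i.succAbove j))
    exact ev.contDiff.comp_contDiffOn hV
  constructor
  · rintro ⟨W, hW, hxW, hWU, u, hu, -, -, hub, c, hc⟩
    -- surjectivity of the pullback of covectors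
    have hsurj : ∀ y ∈ W, ∀ w : (Fin (m + 2) → ℝ) →L[ℝ] ℝ, ∃ w' : (Fin (m + 2) → ℝ) →L[ℝ] ℝ, w = w'.comp (fderiv ℝ u y) := by
      intro y hy w
      let e := ContinuousLinearEquiv.ofBijective (fderiv ℝ u y)
        (LinearMap.ker_eq_bot.mpr (hub y hy).1) (LinearMap.range_eq_top.mpr (hub y hy).2)
      refine ⟨w.comp (e.symm : (Fin (m + 2) → ℝ) →L[ℝ] (Fin (m + 2) → ℝ)), ?_⟩
      ext1 v
      have : e.symm (fderiv ℝ u y v) = v := e.symm_apply_apply v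
      simp only [ContinuousLinearMap.comp_apply, ContinuousLinearEquiv.coe_coe, this]
    have hc0 : c ≠ 0 := by
      rintro rfl
      apply hx0
      ext w
      choose w' hw' using fun i => hsurj x₀ hxW (w i)
      have := hc x₀ hxW w'
      rw [show w = fun i => (w' i).comp (fderiv ℝ u x₀) from funext hw', ← this]
      rfl
    have hV0 : ∀ y ∈ W, V y ≠ 0 := by
      intro y hy h
      apply hc0
      ext w
      rw [hc y hy w, h]
      rfl
    have hcalt : ∀ w : Fin (m + 1) → ((Fin (m + 2) → ℝ) →L[ℝ] ℝ), ∀ i j,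
        i ≠ j → w i = w j → c w = 0 := by
      intro w i j hij hw
      rw [hc x₀ hxW w]
      exact halt x₀ hx₀ _ i j hij (by simp only [hw])
    let γ : (Fin (m + 2) → ℝ) →L[ℝ] ℝ := ∑ i : Fin (m + 2), ((-1 : ℝ) ^ (i : ℕ) *
        c (fun j : Fin (m + 1) => ContinuousLinearMap.proj (i.succAbove j))) •
          (ContinuousLinearMap.proj i : (Fin (m + 2) → ℝ) →L[ℝ] ℝ)
    obtain ⟨hγ0, hγ⟩ := ker_alt m c hcalt hc0 γ (by
      intro v
      simp only [γ]
      rw [sum_apply]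
      refine Finset.sum_congr rfl fun i _ => ?_
      simp only [_root_.smul_apply, ContinuousLinearMap.proj_apply, smul_eq_mul]
      ring)
    let ζ := fderiv ℝ (fun x => γ (u x))
    have hζe : ∀ y ∈ W, ζ y = γ.comp (fderiv ℝ u y) := by
      intro y hy
      exact (γ.hasFDerivAt.comp y ((hu.differentiableOn (by simp)).differentiableAt
        (hW.mem_nhds hy)).hasFDerivAt).fderiv
    have hγu : ContDiffOn ℝ ∞ (fun x => γ (u x)) W := γ.contDiff.comp_contDiffOn hu
    have hζs : ContDiffOn ℝ ∞ ζ W := ((contDiffOn_infty_iff_fderiv_of_isOpen hW).mp hγu).2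
    have hζcl : ∀ y ∈ W, ∀ a b : Fin (m + 2) → ℝ, fderiv ℝ ζ y a b = fderiv ℝ ζ y b a :=
      symm_snd hW _ hγu
    have hζ0 : ∀ y ∈ W, ζ y ≠ 0 := by
      intro y hy h
      apply hγ0
      ext1 v
      obtain ⟨v', rfl⟩ := (hub y hy).2 v
      have := congrArg (fun L => L v') ((hζe y hy).symm.trans h)
      exact this
    have hker : ∀ y ∈ W, ∀ w : (Fin (m + 2) → ℝ) →L[ℝ] ℝ,
            (∀ ws : Fin m → ((Fin (m + 2) → ℝ) →L[ℝ] ℝ), V y (Fin.cons w ws) = 0) ↔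
              (∃ t : ℝ, w = t • ζ y) := by
      intro y hy w
      obtain ⟨w', rfl⟩ := hsurj y hy w
      have hcons : ∀ ws' : Fin m → ((Fin (m + 2) → ℝ) →L[ℝ] ℝ),
          c (Fin.cons w' ws') = V y (Fin.cons (w'.comp (fderiv ℝ u y))
            (fun i => (ws' i).comp (fderiv ℝ u y))) := by
        intro ws'
        rw [hc y hy]
        congr 1
        funext i
        refine Fin.cases ?_ (fun j => ?_) i <;> rfl
      have h1 : (∀ ws : Fin m → ((Fin (m + 2) → ℝ) →L[ℝ] ℝ),
          V y (Fin.cons (w'.comp (fderiv ℝ u y)) ws) = 0) ↔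
          ∀ ws : Fin m → ((Fin (m + 2) → ℝ) →L[ℝ] ℝ), c (Fin.cons w' ws) = 0 := by
        constructor
        · intro h ws'
          rw [hcons]
          exact h _
        · intro h ws
          choose ws' hws' using fun i => hsurj y hy (ws i)
          rw [show ws = fun i => (ws' i).comp (fderiv ℝ u y) from funext hws', ← hcons]
          exact h _
      rw [h1, hγ, hζe y hy]
      constructor
      · rintro ⟨t, rfl⟩
        exact ⟨t, rfl⟩
      · rintro ⟨t, ht⟩
        refine ⟨t, ?_⟩
        ext1 v
        obtain ⟨v', rfl⟩ := (hub y hy).2 v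
        exact congrArg (fun L => L v') ht
    obtain ⟨f, hf, hf0⟩ := exists_factor W α ζ (hαs.mono hWU) hζs
      (fun y hy => (ker_alt m (V y) (halt y (hWU hy)) (hV0 y hy) (α y) (hα y)).1) hζ0 (by
        intro y hy
        rw [← hker y hy, (ker_alt m (V y) (halt y (hWU hy)) (hV0 y hy) (α y) (hα y)).2]
        exact ⟨1, (one_smul _ _).symm⟩)
    exact ⟨W, hW, hxW, hWU, ⟨ζ, hζs, hζ0, hζcl, hker⟩, exists_theta hW α ζ hζs hζcl f hf hf0⟩
  · rintro ⟨W₀, hW₀, hxW₀, hWU₀, ⟨ζ, hζs₀, hζ0, hζcl, hker⟩, -⟩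
    let W := W₀ ∩ α ⁻¹' {0}ᶜ
    have hW : IsOpen W :=
      (hαs.continuousOn.mono hWU₀).isOpen_inter_preimage hW₀ isOpen_compl_singleton
    have hxW : x₀ ∈ W :=
      ⟨hxW₀, (ker_alt m (V x₀) (halt x₀ (hWU₀ hxW₀)) hx0 (α x₀) (hα x₀)).1⟩
    have hV0 : ∀ y ∈ W, V y ≠ 0 := by
      intro y hy h0
      refine hy.2 (ContinuousLinearMap.ext fun v => ?_)
      rw [hα, h0]
      simp
    have hWU : W ⊆ U := Set.inter_subset_left.trans hWU₀
    have hζs : ContDiffOn ℝ ∞ ζ W := hζs₀.mono Set.inter_subset_left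
    obtain ⟨f, hf, hf0⟩ := exists_factor W α ζ (hαs.mono hWU) hζs
      (fun y hy => (ker_alt m (V y) (halt y (hWU hy)) (hV0 y hy) (α y) (hα y)).1)
      (fun y hy => hζ0 y hy.1) (by
        intro y hy
        rw [← hker y hy.1, (ker_alt m (V y) (halt y (hWU hy)) (hV0 y hy) (α y) (hα y)).2]
        exact ⟨1, (one_smul _ _).symm⟩)
    obtain ⟨W', hW', hxW', hW'W, u, hu, hinj, himg, hdu⟩ := normal_form m W hW x₀ hxW ζ hζs
      (hζ0 x₀ hxW₀) (fun y hy => hζcl y hy.1) f hf (fun y hy => (hf0 y hy).1)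
    have key : ∀ y ∈ W', ∀ w : Fin (m+1) → ((Fin (m + 2) → ℝ) →L[ℝ] ℝ),
        V y (fun i => (w i).comp (fderiv ℝ u y)) =
          Dd (Fin.cons (ContinuousLinearMap.proj 0) w : Fin (m+2) → ((Fin (m + 2) → ℝ) →L[ℝ] ℝ)) := by
      intro y hy w
      rw [alt_repr m (V y) (halt y (hWU (hW'W hy))) (α y) (hα y), (hf0 y (hW'W hy)).2,
        Dd_smul_cons, ← (hdu y hy).2]
      have h1 : (Fin.cons ((ContinuousLinearMap.proj 0).comp (fderiv ℝ u y))
          (fun i => (w i).comp (fderiv ℝ u y)) : Fin (m+2) → ((Fin (m + 2) → ℝ) →L[ℝ] ℝ)) =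
          fun i => ((Fin.cons (ContinuousLinearMap.proj 0) w :
            Fin (m+2) → ((Fin (m + 2) → ℝ) →L[ℝ] ℝ)) i).comp (fderiv ℝ u y) := by
        funext i
        refine Fin.cases ?_ (fun j => ?_) i <;> rfl
      rw [h1, Dd_comp, mul_left_comm, (hdu y hy).1, mul_one]
    refine ⟨W', hW', hxW', hW'W.trans hWU, u, hu, hinj, himg,
      fun y hy => bij_of_Dd _ (right_ne_zero_of_mul_eq_one (hdu y hy).1),
      (V x₀).compContinuousLinearMap (fun _ =>
        (ContinuousLinearMap.compL ℝ (Fin (m + 2) → ℝ) (Fin (m + 2) → ℝ) ℝ).flip (fderiv ℝ u x₀)), ?_⟩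
    intro y hy w
    rw [key y hy w, ← key x₀ hxW' w]
    rfl
end

section
/- Let ω be a smooth 1-form on an open set U ⊆ ℝⁿ with ω_x ≠ 0 at a point x ∈ U. Then ω has conformal constant coefficients on a neighbourhood of x if and only if ω ∧ dω = 0 on a neighbourhood of x. -/
/-- Constant coefficients for a `p`-form (see context). -/
def HasConstantCoefficientsFormAt (n p : ℕ) (U : Set (Fin n → ℝ))
    (ω : (Fin n → ℝ) → ((Fin n → ℝ) [×p]→L[ℝ] ℝ)) (x : Fin n → ℝ) : Prop :=
  ∃ V : Set (Fin n → ℝ), IsOpen V ∧ x ∈ V ∧ V ⊆ U ∧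
    ∃ u : (Fin n → ℝ) → (Fin n → ℝ),
      ContDiffOn ℝ (⊤ : ℕ∞) u V ∧ Set.InjOn u V ∧ IsOpen (u '' V) ∧
      (∀ y ∈ V, Function.Bijective (fderiv ℝ u y)) ∧
      ∃ c : (Fin n → ℝ) [×p]→L[ℝ] ℝ,
        ∀ y ∈ V, ∀ v : Fin p → (Fin n → ℝ),
          ω y v = c (fun i => fderiv ℝ u y (v i))

/-- Conformal constant coefficients for a `p`-form: `ω = f·ω′` near `x` for some
smooth function `f` and some `p`-form `ω′` with constant coefficients near `x`. -/
def HasConformalConstantCoefficientsFormAt (n p : ℕ) (U : Set (Fin n → ℝ))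
    (ω : (Fin n → ℝ) → ((Fin n → ℝ) [×p]→L[ℝ] ℝ)) (x : Fin n → ℝ) : Prop :=
  ∃ V : Set (Fin n → ℝ), IsOpen V ∧ x ∈ V ∧ V ⊆ U ∧
    ∃ f : (Fin n → ℝ) → ℝ, ContDiffOn ℝ (⊤ : ℕ∞) f V ∧
      ∃ ω' : (Fin n → ℝ) → ((Fin n → ℝ) [×p]→L[ℝ] ℝ),
        HasConstantCoefficientsFormAt n p Set.univ ω' x ∧
        ∀ y ∈ V, ω y = f y • ω' y

open Set Filter Topology

section frob1
open unitInterval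


/-- Pointwise application of a curve of linear maps to a curve of vectors. -/
noncomputable def frobApp (E F : Type) [NormedAddCommGroup E] [NormedSpace ℝ E]
    [NormedAddCommGroup F] [NormedSpace ℝ F] :
    C(I, E →L[ℝ] F) →L[ℝ] C(I, E) →L[ℝ] C(I, F) :=
  LinearMap.mkContinuous₂
    (LinearMap.mk₂ ℝ (fun (φ : C(I, E →L[ℝ] F)) (g : C(I, E)) =>
        (⟨fun s => φ s (g s), by fun_prop⟩ : C(I, F)))
      (by intros; ext; simp) (by intros; ext; simp) (by intros; ext; simp)
      (by intros; ext; simp)) 1 (by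
    intro φ g
    rw [ContinuousMap.norm_le _ (by positivity)]
    intro s
    rw [one_mul]
    exact (ContinuousLinearMap.le_opNorm _ _).trans
      (mul_le_mul (φ.norm_coe_le_norm s) (g.norm_coe_le_norm s) (norm_nonneg _) (by positivity)))

theorem frobApp_apply {E F : Type} [NormedAddCommGroup E] [NormedSpace ℝ E]
    [NormedAddCommGroup F] [NormedSpace ℝ F] (φ : C(I, E →L[ℝ] F)) (g : C(I, E)) (s : I) :
    frobApp E F φ g s = φ s (g s) := rfl

/-- The Nemytskii operator. -/
def frobNem {E F : Type} [TopologicalSpace E] [TopologicalSpace F] (f : C(E, F)) :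
    C(I, E) → C(I, F) := fun g => f.comp g

theorem frobNem_hasFDerivAt {E F : Type} [NormedAddCommGroup E] [NormedSpace ℝ E]
    [NormedAddCommGroup F] [NormedSpace ℝ F] (f : C(E, F)) (f' : C(E, E →L[ℝ] F))
    (hf : ∀ z, HasFDerivAt f (f' z) z) (g : C(I, E)) :
    HasFDerivAt (frobNem f) (frobApp E F (f'.comp g)) g := by
  rw [hasFDerivAt_iff_isLittleO_nhds_zero, Asymptotics.isLittleO_iff]
  intro c hc
  have hK : IsCompact (range g) := isCompact_range g.continuous
  have h := hK.uniformContinuousAt_of_continuousAt f'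
    (fun a _ => f'.continuous.continuousAt) (Metric.dist_mem_uniformity hc)
  obtain ⟨δ, hδ, hh⟩ := Metric.mem_uniformity_dist.1 h
  filter_upwards [Metric.ball_mem_nhds (0 : C(I, E)) hδ] with k hk
  rw [mem_ball_zero_iff] at hk
  rw [ContinuousMap.norm_le _ (by positivity)]
  intro s
  have hks := k.norm_coe_le_norm s
  have key := Convex.norm_image_sub_le_of_norm_hasFDerivWithin_le' (f := f) (f' := f')
    (φ := f' (g s)) (C := c) (s := Metric.ball (g s) δ) (x := g s) (y := g s + k s) (𝕜 := ℝ)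
    (fun z _ => (hf z).hasFDerivWithinAt) (fun z hz => by
      have := @hh (g s) z (by rw [dist_comm]; exact hz) ⟨s, rfl⟩
      rw [← dist_eq_norm, dist_comm]
      exact this.le) (convex_ball _ _) (Metric.mem_ball_self hδ)
    (by simpa using hks.trans_lt hk)
  have : ‖f (g s + k s) - f (g s) - f' (g s) (k s)‖ ≤ c * ‖k s‖ := by simpa using key
  exact this.trans (mul_le_mul_of_nonneg_left hks hc.le)

theorem frobNem_contDiff_nat (n : ℕ) : ∀ {E F : Type} [NormedAddCommGroup E] [NormedSpace ℝ E]
    [NormedAddCommGroup F] [NormedSpace ℝ F] (f : C(E, F)) (_ : ContDiff ℝ (⊤ : ℕ∞) f),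
    ContDiff ℝ n (frobNem f) := by
  induction n with
  | zero =>
    intro E F _ _ _ _ f hf
    rw [Nat.cast_zero, contDiff_zero]
    exact ContinuousMap.continuous_postcomp f
  | succ n ih =>
    intro E F _ _ _ _ f hf
    have hf' : ContDiff ℝ (⊤ : ℕ∞) (fderiv ℝ f) := (contDiff_infty_iff_fderiv.1 hf).2
    let f' : C(E, E →L[ℝ] F) := ⟨fderiv ℝ f, hf'.continuous⟩
    have hA : ContDiff ℝ n (fun φ : C(I, E →L[ℝ] F) => frobApp E F φ) := by
      fun_prop
    rw [Nat.cast_succ, contDiff_succ_iff_hasFDerivAt]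
    refine ⟨fun g => frobApp E F (frobNem f' g),
      hA.comp (ih f' hf'), fun g => ?_⟩
    exact frobNem_hasFDerivAt f f'
      (fun z => (hf.differentiable (by simp) z).hasFDerivAt) g

theorem frobNem_contDiff {E F : Type} [NormedAddCommGroup E] [NormedSpace ℝ E]
    [NormedAddCommGroup F] [NormedSpace ℝ F] (f : C(E, F)) (hf : ContDiff ℝ (⊤ : ℕ∞) f) :
    ContDiff ℝ (⊤ : ℕ∞) (frobNem f) :=
  contDiff_infty.2 fun n => frobNem_contDiff_nat n f hf

/-- Primitive of a curve (as a function on the line). -/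
noncomputable def frobPrim (g : C(I, ℝ)) (s : ℝ) : ℝ :=
  ∫ t in (0 : ℝ)..s, IccExtend zero_le_one g t

theorem frobPrim_hasDerivAt (g : C(I, ℝ)) (s : ℝ) :
    HasDerivAt (frobPrim g) (IccExtend zero_le_one g s) s :=
  (Continuous.integral_hasStrictDerivAt (g.continuous.Icc_extend') 0 s).hasDerivAt

/-- The integration operator. -/
noncomputable def frobInt : C(I, ℝ) →L[ℝ] C(I, ℝ) :=
  LinearMap.mkContinuous
    { toFun := fun g => ⟨fun s => frobPrim g s, by
        have : Continuous (frobPrim g) :=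
          continuous_iff_continuousAt.2 fun s => (frobPrim_hasDerivAt g s).continuousAt
        fun_prop⟩
      map_add' := by
        intro g h
        ext s
        exact intervalIntegral.integral_add
          (g.continuous.Icc_extend'.intervalIntegrable _ _)
          (h.continuous.Icc_extend'.intervalIntegrable _ _)
      map_smul' := by
        intro c g
        ext s
        exact intervalIntegral.integral_const_mul c _ } 1 (by
    intro g
    rw [ContinuousMap.norm_le _ (by positivity)]
    intro s
    have := intervalIntegral.norm_integral_le_of_norm_le_const (a := (0 : ℝ)) (b := (s : ℝ))
      (f := IccExtend zero_le_one g) (C := ‖g‖) (fun t _ => g.norm_coe_le_norm _)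
    refine this.trans ?_
    rw [sub_zero, abs_of_nonneg s.2.1, one_mul]
    exact mul_le_of_le_one_right (norm_nonneg _) s.2.2)

theorem frobInt_apply (g : C(I, ℝ)) (s : I) : frobInt g s = frobPrim g s := rfl

/-- The inverse function theorem, packaged. -/
theorem frob_ift {X : Type} [NormedAddCommGroup X] [NormedSpace ℝ X] [CompleteSpace X]
    (T : X → X) (O : Set X) (hO : IsOpen O) (hT : ContDiffOn ℝ (⊤ : ℕ∞) T O) (p : X) (hp : p ∈ O)
    (hd : HasFDerivAt T (ContinuousLinearMap.id ℝ X) p) :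
    ∃ Φ : OpenPartialHomeomorph X X, p ∈ Φ.source ∧ Φ.source ⊆ O ∧ (Φ : X → X) = T ∧
      ContDiffOn ℝ (⊤ : ℕ∞) Φ.symm Φ.target := by
  have hTp : ContDiffAt ℝ (⊤ : ℕ∞) T p := hT.contDiffAt (hO.mem_nhds hp)
  have hd' : HasFDerivAt T ((ContinuousLinearEquiv.refl ℝ X : X ≃L[ℝ] X) : X →L[ℝ] X) p := hd
  let Φ₀ := hTp.toOpenPartialHomeomorph T hd' (by simp)
  have hΦ₀ : (Φ₀ : X → X) = T := rfl
  have hcont : ContinuousOn (fderiv ℝ T) O := hT.continuousOn_fderiv_of_isOpen hO (by simp)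
  have hN : {y | fderiv ℝ T y ∈ range
      (ContinuousLinearEquiv.toContinuousLinearMap : (X ≃L[ℝ] X) → X →L[ℝ] X)} ∈ 𝓝 p := by
    apply (hcont.continuousAt (hO.mem_nhds hp)).preimage_mem_nhds
    rw [hd'.fderiv]
    exact ContinuousLinearEquiv.nhds _
  obtain ⟨N, hNs, hNo, hpN⟩ := mem_nhds_iff.1 hN
  refine ⟨Φ₀.restrOpen (O ∩ N) (hO.inter hNo), ?_, ?_, ?_, ?_⟩
  · rw [OpenPartialHomeomorph.restrOpen_source]
    exact ⟨hTp.mem_toOpenPartialHomeomorph_source hd' (by simp), hp, hpN⟩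
  · rw [OpenPartialHomeomorph.restrOpen_source]
    exact fun y hy => hy.2.1
  · rfl
  · intro z hz
    set Φ := Φ₀.restrOpen (O ∩ N) (hO.inter hNo) with hΦ
    have hs := Φ.map_target hz
    have hs' : Φ.symm z ∈ O ∩ N := by
      rw [hΦ, OpenPartialHomeomorph.restrOpen_source] at hs
      exact hs.2
    obtain ⟨e, he⟩ := hNs hs'.2
    have hTz : ContDiffAt ℝ (⊤ : ℕ∞) T (Φ.symm z) := hT.contDiffAt (hO.mem_nhds hs'.1)
    refine (Φ.contDiffAt_symm (f₀' := e) hz ?_ hTz).contDiffWithinAt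
    rw [he]
    exact (hTz.differentiableAt (by simp)).hasFDerivAt

section frob
variable {E : Type} [NormedAddCommGroup E] [NormedSpace ℝ E]

/-- Projection along `e`. -/
noncomputable def frobP (ℓ : E →L[ℝ] ℝ) (e : E) : E →L[ℝ] E :=
  ContinuousLinearMap.id ℝ E - ℓ.smulRight e

theorem frobP_apply (ℓ : E →L[ℝ] ℝ) (e v : E) : frobP ℓ e v = v - ℓ v • e := rfl

/-- The curve attached to the data `(v, α)`. -/
noncomputable def frobCurve (ℓ : E →L[ℝ] ℝ) (e : E) : E × C(I, ℝ) →L[ℝ] C(I, E × E) where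
  toFun q := ⟨fun s => ((s : ℝ) • frobP ℓ e q.1 + ℓ q.1 • e + q.2 s • e, frobP ℓ e q.1),
    by fun_prop⟩
  map_add' q r := by
    ext s
    · simp only [ContinuousMap.coe_mk, ContinuousMap.add_apply, Prod.fst_add, Prod.snd_add,
        map_add, smul_add, add_smul]
      abel
    · simp
  map_smul' c q := by
    ext s
    · simp only [ContinuousMap.coe_mk, ContinuousMap.smul_apply, Prod.smul_fst, Prod.smul_snd,
        map_smul, smul_add, RingHom.id_apply, smul_eq_mul, mul_smul]
      rw [smul_comm]
    · simp
  cont := by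
    apply ContinuousMap.continuous_of_continuous_uncurry
    simp only [Function.uncurry_def, ContinuousMap.coe_mk]
    fun_prop

theorem frobCurve_apply (ℓ : E →L[ℝ] ℝ) (e : E) (q : E × C(I, ℝ)) (s : I) :
    frobCurve ℓ e q s =
      ((s : ℝ) • frobP ℓ e q.1 + ℓ q.1 • e + q.2 s • e, frobP ℓ e q.1) := rfl

/-- The scalar right hand side. -/
noncomputable def frobRhs (η : E → E →L[ℝ] ℝ) (hη : Continuous η) (x : E) : C(E × E, ℝ) :=
  ⟨fun z => η (x + z.1) z.2, by fun_prop⟩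

theorem frobRhs_contDiff (η : E → E →L[ℝ] ℝ) (hη : ContDiff ℝ (⊤ : ℕ∞) η) (x : E) :
    ContDiff ℝ (⊤ : ℕ∞) (frobRhs η hη.continuous x) := by
  change ContDiff ℝ (⊤ : ℕ∞) (fun z : E × E => η (x + z.1) z.2)
  fun_prop

theorem frobRhs_fderiv (η : E → E →L[ℝ] ℝ) (hη : ContDiff ℝ (⊤ : ℕ∞) η) (x : E) (z d : E × E) :
    fderiv ℝ (frobRhs η hη.continuous x) z d =
      fderiv ℝ η (x + z.1) d.1 z.2 + η (x + z.1) d.2 := by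
  have h1 : HasFDerivAt (fun z : E × E => x + z.1) (ContinuousLinearMap.fst ℝ E E) z :=
    (hasFDerivAt_fst).const_add x
  have h2 : HasFDerivAt η (fderiv ℝ η (x + z.1)) (x + z.1) :=
    (hη.differentiable (by simp) _).hasFDerivAt
  have h3 := (h2.comp z h1).clm_apply (hasFDerivAt_snd (𝕜 := ℝ) (E := E) (F := E) (p := z))
  have h4 : HasFDerivAt (frobRhs η hη.continuous x) _ z := h3
  rw [h4.fderiv]
  simp [add_comm]

variable [CompleteSpace E]

theorem frob_family (η : E → E →L[ℝ] ℝ) (hη : ContDiff ℝ (⊤ : ℕ∞) η) (x e : E)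
    (hxe : η x e = 1) :
    ∃ (O : Set E) (α : E → C(I, ℝ)), IsOpen O ∧ (0 : E) ∈ O ∧ ContDiffOn ℝ (⊤ : ℕ∞) α O ∧
      α 0 = 0 ∧ fderiv ℝ α 0 = 0 ∧
      (∀ v ∈ O, α v = - frobInt (frobNem (frobRhs η hη.continuous x)
        (frobCurve (η x) e (v, α v)))) ∧
      (∀ v ∈ O, ∀ w, ∃ h : C(I, ℝ), fderiv ℝ α v w = - frobInt h ∧
        ∀ s, h s = fderiv ℝ (frobRhs η hη.continuous x) (frobCurve (η x) e (v, α v) s)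
          (frobCurve (η x) e (w, fderiv ℝ α v w) s)) := by
  set f := frobRhs η hη.continuous x with hf
  have hfs : ContDiff ℝ (⊤ : ℕ∞) f := frobRhs_contDiff η hη x
  let f' : C(E × E, E × E →L[ℝ] ℝ) :=
    ⟨fderiv ℝ f, (contDiff_infty_iff_fderiv.1 hfs).2.continuous⟩
  let Γ := frobCurve (η x) e
  let K : E × C(I, ℝ) → C(I, ℝ) := fun q => frobInt (frobNem f (Γ q))
  let K' : E × C(I, ℝ) → (E × C(I, ℝ) →L[ℝ] C(I, ℝ)) := fun q =>
    frobInt.comp ((frobApp (E × E) ℝ (f'.comp (Γ q))).comp Γ)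
  have hKs : ContDiff ℝ (⊤ : ℕ∞) K := by
    have h1 : ContDiff ℝ (⊤ : ℕ∞) (fun q => Γ q) := by fun_prop
    have h2 : ContDiff ℝ (⊤ : ℕ∞) (fun q => frobInt q) := by fun_prop
    exact h2.comp ((frobNem_contDiff f hfs).comp h1)
  have hKd : ∀ q, HasFDerivAt K (K' q) q := by
    intro q
    have h := frobNem_hasFDerivAt f f'
      (fun z => (hfs.differentiable (by simp) z).hasFDerivAt) (Γ q)
    have h1 : HasFDerivAt (fun q => Γ q) Γ q := Γ.hasFDerivAt
    have h2 : HasFDerivAt (fun q => frobInt q) frobInt (frobNem f (Γ q)) := frobInt.hasFDerivAt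
    exact h2.comp q (h.comp q h1)
  have hK0 : K 0 = 0 := by
    have : frobNem f (Γ 0) = 0 := by
      ext s
      change η (x + (Γ 0 s).1) (Γ 0 s).2 = 0
      rw [map_zero]
      simp
    change frobInt (frobNem f (Γ 0)) = 0
    rw [this, map_zero]
  have hK'0 : K' 0 = 0 := by
    have h0 : ∀ q, frobApp (E × E) ℝ (f'.comp (Γ 0)) (Γ q) = 0 := by
      intro q
      ext s
      change fderiv ℝ f (Γ 0 s) (Γ q s) = 0
      rw [hf, frobRhs_fderiv η hη, map_zero]
      simp [Γ, frobCurve_apply, frobP_apply, hxe]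
    refine ContinuousLinearMap.ext fun q => ?_
    change frobInt (frobApp (E × E) ℝ (f'.comp (Γ 0)) (Γ q)) = 0
    rw [h0, map_zero]
  let T : E × C(I, ℝ) → E × C(I, ℝ) := fun q => q + (0, K q)
  have hTs : ContDiff ℝ (⊤ : ℕ∞) T := contDiff_id.add (contDiff_const.prodMk hKs)
  have hTd : HasFDerivAt T (ContinuousLinearMap.id ℝ _) 0 := by
    have h := (hasFDerivAt_id (𝕜 := ℝ) (0 : E × C(I, ℝ))).add
      ((hasFDerivAt_const (0 : E) (0 : E × C(I, ℝ))).prodMk (hKd 0))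
    rw [hK'0] at h
    refine HasFDerivAt.congr_fderiv h (ContinuousLinearMap.ext fun q => ?_)
    change q + ((0 : E), (0 : C(I, ℝ))) = q
    simp
  obtain ⟨Φ, h0, -, hΦ, hsm⟩ := frob_ift T univ isOpen_univ hTs.contDiffOn 0 (mem_univ _) hTd
  have hT0 : T 0 = 0 := by
    change (0 : E × C(I, ℝ)) + (0, K 0) = 0
    rw [hK0]
    simp
  have h0t : (0 : E × C(I, ℝ)) ∈ Φ.target := by
    have := Φ.map_source h0
    rwa [hΦ, hT0] at this
  let ι : E → E × C(I, ℝ) := fun v => (v, 0)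
  have hι : ContDiff ℝ (⊤ : ℕ∞) ι := contDiff_id.prodMk contDiff_const
  let O : Set E := ι ⁻¹' Φ.target
  have hO : IsOpen O := Φ.open_target.preimage hι.continuous
  let α : E → C(I, ℝ) := fun v => (Φ.symm (ι v)).2
  have hα : ContDiffOn ℝ (⊤ : ℕ∞) α O :=
    contDiff_snd.comp_contDiffOn (hsm.comp hι.contDiffOn (fun v hv => hv))
  have hαeq : ∀ v ∈ O, α v = - K (v, α v) := by
    intro v hv
    have h := Φ.right_inv hv
    rw [hΦ] at h
    have h1 : (Φ.symm (ι v)).1 = v := by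
      have := congrArg Prod.fst h
      simpa [T, ι] using this
    have h2 : α v + K (Φ.symm (ι v)) = 0 := by
      have := congrArg Prod.snd h
      simpa [T, ι, α] using this
    have h3 : Φ.symm (ι v) = (v, α v) := Prod.ext h1 rfl
    rw [h3] at h2
    exact eq_neg_of_add_eq_zero_left h2
  have hα0 : α 0 = 0 := by
    have h := Φ.left_inv h0
    rw [hΦ, hT0] at h
    change (Φ.symm 0).2 = 0
    rw [h]
    rfl
  have h0O : (0 : E) ∈ O := h0t
  have hder : ∀ v ∈ O, ∀ w, fderiv ℝ α v w = - K' (v, α v) (w, fderiv ℝ α v w) := by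
    intro v hv w
    have hd : HasFDerivAt α (fderiv ℝ α v) v :=
      ((hα.contDiffAt (hO.mem_nhds hv)).differentiableAt (by simp)).hasFDerivAt
    have h2 := ((hKd (v, α v)).comp v ((hasFDerivAt_id (𝕜 := ℝ) v).prodMk hd)).neg
    have h3 : α =ᶠ[𝓝 v] (-(K ∘ fun v => (id v, α v))) := by
      filter_upwards [hO.mem_nhds hv] with y hy
      exact hαeq y hy
    have h4 := hd.unique (h2.congr_of_eventuallyEq h3)
    have h5 := congrArg (fun L => L w) h4
    exact h5
  refine ⟨O, α, hO, h0O, hα, hα0, ?_, hαeq, ?_⟩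
  · refine ContinuousLinearMap.ext fun w => ?_
    rw [hder 0 h0O, hα0]
    change - K' 0 _ = 0
    rw [hK'0]
    simp
  · intro v hv w
    exact ⟨frobApp (E × E) ℝ (f'.comp (Γ (v, α v))) (Γ (w, fderiv ℝ α v w)),
      hder v hv w, fun s => rfl⟩

end frob

section frob2
variable {E : Type} [NormedAddCommGroup E] [NormedSpace ℝ E] 

/-- The Gronwall argument along one curve. -/
theorem frob_gronwall (η : E → E →L[ℝ] ℝ) (hη : ContDiff ℝ (⊤ : ℕ∞) η) (e : E)
    (B : Set E) (hB : IsOpen B) (h1 : ∀ y ∈ B, η y e = 1)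
    (hint : ∀ y ∈ B, ∀ a b, (fderiv ℝ η y a b - fderiv ℝ η y b a)
      + η y a * (fderiv ℝ η y b e - fderiv ℝ η y e b)
      + η y b * (fderiv ℝ η y e a - fderiv ℝ η y a e) = 0)
    (a b : E) (g h : ℝ → ℝ) (hg : Continuous g) (z R : ℝ → E)
    (hz : ∀ s, HasDerivAt z (a - g s • e) s) (hR : ∀ s, HasDerivAt R (b - h s • e) s)
    (hzB : ∀ s ∈ Icc (0 : ℝ) 1, z s ∈ B) (hgs : ∀ s ∈ Icc (0 : ℝ) 1, g s = η (z s) a)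
    (hhs : ∀ s ∈ Icc (0 : ℝ) 1, h s = fderiv ℝ η (z s) (R s) a + η (z s) b)
    (hR0 : R 0 = 0) : η (z 1) (R 1) = 0 := by
  have hηd : ∀ y, HasFDerivAt η (fderiv ℝ η y) y := fun y =>
    (hη.differentiable (by simp) y).hasFDerivAt
  have hη' : Continuous (fderiv ℝ η) := (contDiff_infty_iff_fderiv.1 hη).2.continuous
  have hzc : Continuous z := continuous_iff_continuousAt.2 fun s => (hz s).continuousAt
  have hDe : ∀ y ∈ B, ∀ c, fderiv ℝ η y c e = 0 := by
    intro y hy c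
    have h2 : HasFDerivAt (fun y => η y e) ((fderiv ℝ η y).flip e) y := by
      have := (hηd y).clm_apply (hasFDerivAt_const e y)
      refine this.congr_fderiv (ContinuousLinearMap.ext fun c => ?_)
      simp
    have h3 : (fun y => η y e) =ᶠ[𝓝 y] fun _ => 1 := by
      filter_upwards [hB.mem_nhds hy] with u hu using h1 u hu
    have h4 := (h2.congr_of_eventuallyEq h3.symm).unique (hasFDerivAt_const (1 : ℝ) y)
    have h5 := congrArg (fun L => L c) h4
    simpa using h5
  let J : ℝ → ℝ := fun s => η (z s) (R s)
  let J' : ℝ → ℝ := fun s => fderiv ℝ η (z s) (a - g s • e) (R s) + η (z s) (b - h s • e)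
  have hJ : ∀ s, HasDerivAt J (J' s) s := fun s =>
    ((hηd (z s)).comp_hasDerivAt s (hz s)).clm_apply (hR s)
  let k : ℝ → ℝ := fun s => fderiv ℝ η (z s) e (a - g s • e) - fderiv ℝ η (z s) (a - g s • e) e
  have hk : Continuous k := by fun_prop
  obtain ⟨C, hC⟩ := isCompact_Icc.exists_bound_of_continuousOn (s := Icc (0 : ℝ) 1) hk.continuousOn
  have hJk : ∀ s ∈ Icc (0 : ℝ) 1, J' s = - (k s * J s) := by
    intro s hs
    have hb := hzB s hs
    have e1 := h1 _ hb
    have e2 := hint _ hb (a - g s • e) (R s)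
    have e3 : η (z s) (a - g s • e) = 0 := by
      rw [map_sub, map_smul, e1, hgs s hs]; simp
    have e4 : fderiv ℝ η (z s) (R s) (a - g s • e) = fderiv ℝ η (z s) (R s) a := by
      rw [map_sub, map_smul, hDe _ hb]; simp
    have e5 : η (z s) (b - h s • e) = - fderiv ℝ η (z s) (R s) a := by
      rw [map_sub, map_smul, e1, hhs s hs]; simp
    rw [e3, e4] at e2
    simp only [J', k, J]
    rw [e5]
    linarith
  have := eq_zero_of_abs_deriv_le_mul_abs_self_of_eq_zero_right (f := J) (f' := J') (K := C)
    (a := 0) (b := 1) (fun s _ => (hJ s).continuousAt.continuousWithinAt)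
    (fun s _ => (hJ s).hasDerivWithinAt) (by simp [J, hR0]) (fun s hs => by
      rw [hJk s ⟨hs.1, hs.2.le⟩, norm_neg, norm_mul]
      exact mul_le_mul_of_nonneg_right (hC s ⟨hs.1, hs.2.le⟩) (norm_nonneg _))
  exact this 1 ⟨zero_le_one, le_rfl⟩

variable [CompleteSpace E]

theorem frob_main (η : E → E →L[ℝ] ℝ) (hη : ContDiff ℝ (⊤ : ℕ∞) η) (x e : E)
    (ρ : ℝ) (hρ : 0 < ρ) (h1 : ∀ y ∈ Metric.ball x ρ, η y e = 1)
    (hint : ∀ y ∈ Metric.ball x ρ, ∀ a b, (fderiv ℝ η y a b - fderiv ℝ η y b a)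
      + η y a * (fderiv ℝ η y b e - fderiv ℝ η y e b)
      + η y b * (fderiv ℝ η y e a - fderiv ℝ η y a e) = 0) :
    ∃ Φ : OpenPartialHomeomorph E E, x ∈ Φ.target ∧ Φ.target ⊆ Metric.ball x ρ ∧
      ContDiffOn ℝ (⊤ : ℕ∞) Φ Φ.source ∧ ContDiffOn ℝ (⊤ : ℕ∞) Φ.symm Φ.target ∧
      ∀ v ∈ Φ.source, ∀ w, η x w = 0 → η (Φ v) (fderiv ℝ Φ v w) = 0 := by
  have hxe : η x e = 1 := h1 x (Metric.mem_ball_self hρ)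
  obtain ⟨O₁, α, hO₁, h0, hα, hα0, hα'0, hαeq, hαd⟩ := frob_family η hη x e hxe
  let Γ := frobCurve (η x) e
  have hΓ : ContDiff ℝ (⊤ : ℕ∞) (fun q => Γ q) := by fun_prop
  let c : E → C(I, E × E) := fun v => Γ (v, α v)
  have hc : ContDiffOn ℝ (⊤ : ℕ∞) c O₁ := hΓ.comp_contDiffOn (contDiffOn_id.prodMk hα)
  have hc0 : c 0 = 0 := by
    change Γ (0, α 0) = 0
    rw [hα0]
    exact map_zero Γ
  let O : Set E := O₁ ∩ c ⁻¹' Metric.ball 0 ρ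
  have hO : IsOpen O := hc.continuousOn.isOpen_inter_preimage hO₁ Metric.isOpen_ball
  have h0O : (0 : E) ∈ O := ⟨h0, by rw [mem_preimage, hc0]; exact Metric.mem_ball_self hρ⟩
  let ev : C(I, E × E) →L[ℝ] E :=
    (ContinuousLinearMap.fst ℝ E E).comp (ContinuousMap.evalCLM ℝ (1 : I))
  let Ψ : E → E := fun v => x + ev (c v)
  have hev : ContDiff ℝ (⊤ : ℕ∞) (fun q => ev q) := by fun_prop
  have hΨ : ContDiffOn ℝ (⊤ : ℕ∞) Ψ O :=
    contDiffOn_const.add (hev.comp_contDiffOn (hc.mono inter_subset_left))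
  have hΨd : ∀ v ∈ O, HasFDerivAt Ψ (ev.comp (Γ.comp
      ((ContinuousLinearMap.id ℝ E).prod (fderiv ℝ α v)))) v := by
    intro v hv
    have hd : HasFDerivAt α (fderiv ℝ α v) v :=
      ((hα.contDiffAt (hO₁.mem_nhds hv.1)).differentiableAt (by simp)).hasFDerivAt
    have h2 : HasFDerivAt (fun q => Γ q) Γ (v, α v) := Γ.hasFDerivAt
    have h3 : HasFDerivAt (fun q => ev q) ev (c v) := ev.hasFDerivAt
    exact (h3.comp v (h2.comp v ((hasFDerivAt_id (𝕜 := ℝ) v).prodMk hd))).const_add x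
  have hΨ0 : HasFDerivAt Ψ (ContinuousLinearMap.id ℝ E) 0 := by
    refine (hΨd 0 h0O).congr_fderiv (ContinuousLinearMap.ext fun w => ?_)
    rw [hα'0]
    change (frobCurve (η x) e (w, (0 : C(I, ℝ))) 1).1 = w
    rw [frobCurve_apply]
    simp [frobP_apply]
  obtain ⟨Φ, hs, hsub, hΦ, hsm⟩ := frob_ift Ψ O hO hΨ 0 h0O hΨ0
  have hcB : ∀ v ∈ O, ∀ s, x + (c v s).1 ∈ Metric.ball x ρ := by
    intro v hv s
    have h2 : ‖c v‖ < ρ := by simpa using hv.2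
    have h3 := ((norm_fst_le (c v s)).trans ((c v).norm_coe_le_norm s)).trans_lt h2
    simpa using h3
  refine ⟨Φ, ?_, ?_, ?_, hsm, ?_⟩
  · have h2 := Φ.map_source hs
    rw [hΦ] at h2
    have h3 : Ψ 0 = x := by
      change x + ev (c 0) = x
      rw [hc0, map_zero, add_zero]
    rwa [h3] at h2
  · intro y hy
    have h2 := Φ.map_target hy
    have h3 := Φ.right_inv hy
    rw [hΦ] at h3
    rw [← h3]
    exact hcB _ (hsub h2) 1
  · rw [hΦ]
    exact hΨ.mono hsub
  · intro v hv w hw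
    have hvO := hsub hv
    rw [hΦ, (hΨd v hvO).fderiv]
    set g : C(I, ℝ) := frobNem (frobRhs η hη.continuous x) (c v) with hg
    obtain ⟨h, hh, hhs⟩ := hαd v hvO.1 w
    set β := fderiv ℝ α v w with hβ
    let z : ℝ → E := fun s => x + (s • frobP (η x) e v + η x v • e + (- frobPrim g s) • e)
    let R : ℝ → E := fun s => s • frobP (η x) e w + η x w • e + (- frobPrim h s) • e
    have hzs : ∀ s : I, z s = x + (c v s).1 := by
      intro s
      change _ = x + (frobCurve (η x) e (v, α v) s).1
      rw [frobCurve_apply]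
      have : α v s = - frobPrim g s := congrArg (fun k : C(I, ℝ) => k s) (hαeq v hvO.1)
      simp only [z]
      rw [this]
    have hRs : ∀ s : I, R s = (Γ (w, β) s).1 := by
      intro s
      change _ = (frobCurve (η x) e (w, β) s).1
      rw [frobCurve_apply]
      have : β s = - frobPrim h s := congrArg (fun k : C(I, ℝ) => k s) hh
      simp only [R]
      rw [this]
    have key := frob_gronwall η hη e (Metric.ball x ρ) Metric.isOpen_ball h1 hint
      (frobP (η x) e v) (frobP (η x) e w) (IccExtend zero_le_one g) (IccExtend zero_le_one h)
      g.continuous.Icc_extend' z R (fun s => ?_) (fun s => ?_) (fun s hs' => ?_)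
      (fun s hs' => ?_) (fun s hs' => ?_) ?_
    · have e1 := hzs 1
      have e2 := hRs 1
      rw [show ((1 : I) : ℝ) = 1 from rfl] at e1 e2
      rw [e1, e2] at key
      exact key
    · have h2 := ((((hasDerivAt_id s).smul_const (frobP (η x) e v)).add_const (η x v • e)).add
        ((frobPrim_hasDerivAt g s).neg.smul_const e)).const_add x
      refine h2.congr_deriv ?_
      simp [sub_eq_add_neg]
    · have h2 := (((hasDerivAt_id s).smul_const (frobP (η x) e w)).add_const (η x w • e)).add
        ((frobPrim_hasDerivAt h s).neg.smul_const e)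
      refine h2.congr_deriv ?_
      simp [sub_eq_add_neg]
    · rw [hzs ⟨s, hs'⟩]
      exact hcB v hvO _
    · rw [IccExtend_of_mem _ _ hs', hzs ⟨s, hs'⟩]
      rfl
    · rw [IccExtend_of_mem _ _ hs', hhs, frobRhs_fderiv η hη, hzs ⟨s, hs'⟩, hRs ⟨s, hs'⟩]
      rfl
    · simp [R, hw, frobPrim]

end frob2

end frob1

section frob3
variable {E : Type} [NormedAddCommGroup E] [NormedSpace ℝ E]

/-- The 3-form `η ∧ dη`. -/
noncomputable def frobW (η : E → E →L[ℝ] ℝ) (y a b c : E) : ℝ :=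
  η y a * (fderiv ℝ η y b c - fderiv ℝ η y c b) + η y b * (fderiv ℝ η y c a - fderiv ℝ η y a c)
    + η y c * (fderiv ℝ η y a b - fderiv ℝ η y b a)

theorem frobW_smul (ω η : E → E →L[ℝ] ℝ) (f : E → ℝ) (y : E) (hf : DifferentiableAt ℝ f y)
    (hη : DifferentiableAt ℝ η y) (h : ω =ᶠ[𝓝 y] fun z => f z • η z) (a b c : E) :
    frobW ω y a b c = f y ^ 2 * frobW η y a b c := by
  have h2 := (hf.hasFDerivAt.fun_smul hη.hasFDerivAt).congr_of_eventuallyEq h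
  have h3 : ∀ p q, fderiv ℝ ω y p q = f y * fderiv ℝ η y p q + fderiv ℝ f y p * η y q := by
    intro p q
    rw [h2.fderiv]
    simp
  have h4 : ∀ p, ω y p = f y * η y p := by
    intro p
    rw [h.eq_of_nhds]
    simp
  simp only [frobW, h3, h4]
  ring

/-- A 1-form as a map into the dual. -/
noncomputable def frobHat (E : Type) [NormedAddCommGroup E] [NormedSpace ℝ E] :
    (E [×1]→L[ℝ] ℝ) →L[ℝ] (E →L[ℝ] ℝ) :=
  ((continuousMultilinearCurryFin1 ℝ E ℝ).toContinuousLinearEquiv :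
    (E [×1]→L[ℝ] ℝ) →L[ℝ] (E →L[ℝ] ℝ))

theorem frobHat_apply (ω : E [×1]→L[ℝ] ℝ) (v : E) : frobHat E ω v = ω (fun _ => v) := by
  change continuousMultilinearCurryFin1 ℝ E ℝ ω v = _
  rw [continuousMultilinearCurryFin1_apply]
  congr 1

theorem frobHat_fderiv (ω : E → E [×1]→L[ℝ] ℝ) (y : E) (h : DifferentiableAt ℝ ω y) (a b : E) :
    fderiv ℝ (fun z => frobHat E (ω z)) y a b = fderiv ℝ ω y a (fun _ => b) := by
  have h2 : HasFDerivAt (fun z => frobHat E (ω z)) ((frobHat E).comp (fderiv ℝ ω y)) y :=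
    (frobHat E).hasFDerivAt.comp y h.hasFDerivAt
  rw [h2.fderiv]
  exact frobHat_apply _ _

theorem frob_sum (ω : E → E [×1]→L[ℝ] ℝ) (y : E) (h : DifferentiableAt ℝ ω y) (v : Fin 3 → E) :
    (1 / 2 : ℝ) * ∑ σ : Equiv.Perm (Fin 3),
            ((Equiv.Perm.sign σ : ℤ) : ℝ) * (ω y (fun _ => v (σ 0)) *
              (fderiv ℝ ω y (v (σ 1)) (fun _ => v (σ 2)) -
               fderiv ℝ ω y (v (σ 2)) (fun _ => v (σ 1)))) =
    frobW (fun z => frobHat E (ω z)) y (v 0) (v 1) (v 2) := by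
  simp only [← frobHat_fderiv ω y h, ← frobHat_apply (ω y)]
  have hu : (Finset.univ : Finset (Equiv.Perm (Fin 3))) =
      {1, Equiv.swap 0 1, Equiv.swap 0 2, Equiv.swap 1 2, Equiv.swap 0 1 * Equiv.swap 1 2,
        Equiv.swap 1 2 * Equiv.swap 0 1} := by decide
  rw [hu]
  rw [Finset.sum_insert (by decide), Finset.sum_insert (by decide), Finset.sum_insert (by decide),
    Finset.sum_insert (by decide), Finset.sum_insert (by decide), Finset.sum_singleton]
  have s1 : Equiv.Perm.sign (Equiv.swap (0 : Fin 3) 1) = -1 := by decide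
  have s2 : Equiv.Perm.sign (Equiv.swap (0 : Fin 3) 2) = -1 := by decide
  have s3 : Equiv.Perm.sign (Equiv.swap (1 : Fin 3) 2) = -1 := by decide
  have a1 : (Equiv.swap (0 : Fin 3) 1) 0 = 1 := by decide
  have a2 : (Equiv.swap (0 : Fin 3) 1) 1 = 0 := by decide
  have a3 : (Equiv.swap (0 : Fin 3) 1) 2 = 2 := by decide
  have b1 : (Equiv.swap (0 : Fin 3) 2) 0 = 2 := by decide
  have b2 : (Equiv.swap (0 : Fin 3) 2) 1 = 1 := by decide
  have b3 : (Equiv.swap (0 : Fin 3) 2) 2 = 0 := by decide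
  have c1 : (Equiv.swap (1 : Fin 3) 2) 0 = 0 := by decide
  have c2 : (Equiv.swap (1 : Fin 3) 2) 1 = 2 := by decide
  have c3 : (Equiv.swap (1 : Fin 3) 2) 2 = 1 := by decide
  simp only [Equiv.Perm.sign_mul, s1, s2, s3, Equiv.Perm.mul_apply, Equiv.Perm.sign_one,
    Equiv.Perm.one_apply, a1, a2, a3, b1, b2, b3, c1, c2, c3, frobW]
  push_cast
  ring

theorem frobW_exact {F : Type} [NormedAddCommGroup F] [NormedSpace ℝ F] (u : E → F) (y : E)
    (hu : ContDiffAt ℝ (⊤ : ℕ∞) u y) (c : F →L[ℝ] ℝ) (p q r : E) :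
    DifferentiableAt ℝ (fun z => c.comp (fderiv ℝ u z)) y ∧
    frobW (fun z => c.comp (fderiv ℝ u z)) y p q r = 0 := by
  have hd : DifferentiableAt ℝ (fderiv ℝ u) y :=
    (hu.fderiv_right (m := 1) (by norm_num; exact WithTop.coe_le_coe.2 le_top)).differentiableAt (by simp)
  have hs : IsSymmSndFDerivAt ℝ u y := hu.isSymmSndFDerivAt (by
    simp only [minSmoothness_of_isRCLikeNormedField]
    exact WithTop.coe_le_coe.2 le_top)
  have h2 : HasFDerivAt (fun z => c.comp (fderiv ℝ u z))
      ((ContinuousLinearMap.compL ℝ E F ℝ c).comp (fderiv ℝ (fderiv ℝ u) y)) y :=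
    (ContinuousLinearMap.compL ℝ E F ℝ c).hasFDerivAt.comp y hd.hasFDerivAt
  refine ⟨h2.differentiableAt, ?_⟩
  have h3 : ∀ a b, fderiv ℝ (fun z => c.comp (fderiv ℝ u z)) y a b =
      c (fderiv ℝ (fderiv ℝ u) y a b) := by
    intro a b
    rw [h2.fderiv]
    rfl
  simp only [frobW, h3]
  rw [hs.eq q r, hs.eq r p, hs.eq p q]
  simp

theorem frob_conv [FiniteDimensional ℝ E] (ω : E → E →L[ℝ] ℝ) (W : Set E) (hW : IsOpen W)
    (hω : ContDiffOn ℝ (⊤ : ℕ∞) ω W) (x : E) (hx : x ∈ W) (hx0 : ω x ≠ 0)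
    (hint : ∀ y ∈ W, ∀ a b c, frobW ω y a b c = 0) :
    ∃ (V : Set E) (u : E → E) (f : E → ℝ) (ℓ : E →L[ℝ] ℝ), IsOpen V ∧ x ∈ V ∧ V ⊆ W ∧
      ContDiffOn ℝ (⊤ : ℕ∞) u V ∧ InjOn u V ∧ IsOpen (u '' V) ∧
      (∀ y ∈ V, Function.Bijective (fderiv ℝ u y)) ∧ ContDiffOn ℝ (⊤ : ℕ∞) f V ∧
      ∀ y ∈ V, ω y = f y • (ℓ.comp (fderiv ℝ u y)) := by
  have : CompleteSpace E := FiniteDimensional.complete ℝ E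
  obtain ⟨e, he⟩ : ∃ e, ω x e ≠ 0 := by
    by_contra! hcon
    exact hx0 (ContinuousLinearMap.ext hcon)
  let d : E → ℝ := fun y => ω y e
  have hd : ContDiffOn ℝ (⊤ : ℕ∞) d W := hω.clm_apply contDiffOn_const
  let W' : Set E := W ∩ d ⁻¹' {0}ᶜ
  have hW' : IsOpen W' := hd.continuousOn.isOpen_inter_preimage hW isOpen_compl_singleton
  have hxW' : x ∈ W' := ⟨hx, he⟩
  let g : E → E →L[ℝ] ℝ := fun y => (d y)⁻¹ • ω y
  have hg : ContDiffOn ℝ (⊤ : ℕ∞) g W' :=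
    ((hd.mono inter_subset_left).inv (fun y hy => hy.2)).smul (hω.mono inter_subset_left)
  obtain ⟨r, hr, hrW⟩ := Metric.isOpen_iff.1 hW' x hxW'
  let χ : ContDiffBump x := ⟨r / 4, r / 2, by positivity, by linarith⟩
  have hχs : tsupport χ ⊆ W' := by
    rw [χ.tsupport_eq]
    exact (Metric.closedBall_subset_ball (by change r / 2 < r; linarith)).trans hrW
  let η : E → E →L[ℝ] ℝ := fun y => χ y • g y
  have hη : ContDiff ℝ (⊤ : ℕ∞) η := by
    rw [contDiff_iff_contDiffAt]
    intro y
    by_cases hy : y ∈ W'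
    · exact χ.contDiffAt.smul (hg.contDiffAt (hW'.mem_nhds hy))
    · have hy' : y ∉ tsupport χ := fun h => hy (hχs h)
      have h2 : η =ᶠ[𝓝 y] fun _ => 0 := by
        filter_upwards [(isClosed_tsupport χ).isOpen_compl.mem_nhds hy'] with z hz
        have : χ z = 0 := image_eq_zero_of_notMem_tsupport hz
        simp [η, this]
      exact contDiffAt_const.congr_of_eventuallyEq h2
  have hball : ∀ y ∈ Metric.ball x (r / 4), y ∈ W' := fun y hy =>
    hrW (Metric.ball_subset_ball (by linarith) hy)
  have hηg : ∀ y ∈ Metric.ball x (r / 4), η y = g y := by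
    intro y hy
    have : χ y = 1 := χ.one_of_mem_closedBall (Metric.ball_subset_closedBall hy)
    simp [η, this]
  have h1 : ∀ y ∈ Metric.ball x (r / 4), η y e = 1 := by
    intro y hy
    rw [hηg y hy]
    exact inv_mul_cancel₀ (hball y hy).2
  have hωη : ∀ y ∈ Metric.ball x (r / 4), ω y = d y • η y := by
    intro y hy
    rw [hηg y hy]
    have : d y ≠ 0 := (hball y hy).2
    simp [g, smul_smul, this]
  have hW3 : ∀ y ∈ Metric.ball x (r / 4), ∀ a b c, frobW η y a b c = 0 := by
    intro y hy a b c
    have hyW := hball y hy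
    have h2 := frobW_smul ω η d y
      ((hd.contDiffAt (hW.mem_nhds hyW.1)).differentiableAt (by simp))
      (hη.differentiable (by simp) y) (by
        filter_upwards [Metric.isOpen_ball.mem_nhds hy] with z hz using hωη z hz) a b c
    rw [hint y hyW.1] at h2
    exact (mul_eq_zero.1 h2.symm).resolve_left (pow_ne_zero 2 hyW.2)
  obtain ⟨Φ, hxt, htb, hΦ, hΦs, hker⟩ := frob_main η hη x e (r / 4) (by positivity) h1 (by
    intro y hy a b
    have h2 := hW3 y hy e a b
    rw [frobW, h1 y hy] at h2
    linarith)
  have hinv : ∀ y ∈ Φ.target, HasFDerivAt Φ (fderiv ℝ Φ (Φ.symm y)) (Φ.symm y) := fun y hy =>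
    ((hΦ.contDiffAt (Φ.open_source.mem_nhds (Φ.map_target hy))).differentiableAt
      (by simp)).hasFDerivAt
  have hinv' : ∀ y ∈ Φ.target, HasFDerivAt Φ.symm (fderiv ℝ Φ.symm y) y := fun y hy =>
    ((hΦs.contDiffAt (Φ.open_target.mem_nhds hy)).differentiableAt (by simp)).hasFDerivAt
  have hcomp1 : ∀ y ∈ Φ.target, ∀ w, fderiv ℝ Φ (Φ.symm y) (fderiv ℝ Φ.symm y w) = w := by
    intro y hy w
    have h2 := (hinv y hy).comp y (hinv' y hy)
    have h3 : id =ᶠ[𝓝 y] Φ ∘ Φ.symm := by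
      filter_upwards [Φ.open_target.mem_nhds hy] with z hz using (Φ.right_inv hz).symm
    have h4 := (h2.congr_of_eventuallyEq h3).unique (hasFDerivAt_id y)
    exact congrArg (fun L => L w) h4
  have hcomp2 : ∀ y ∈ Φ.target, ∀ w, fderiv ℝ Φ.symm y (fderiv ℝ Φ (Φ.symm y) w) = w := by
    intro y hy w
    have h1' := hinv' y hy
    rw [← Φ.right_inv hy] at h1'
    have h2 := h1'.comp (Φ.symm y) (hinv y hy)
    rw [Φ.right_inv hy] at h2
    have h3 : id =ᶠ[𝓝 (Φ.symm y)] Φ.symm ∘ Φ := by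
      filter_upwards [Φ.open_source.mem_nhds (Φ.map_target hy)] with z hz
        using (Φ.left_inv hz).symm
    have h4 := (h2.congr_of_eventuallyEq h3).unique (hasFDerivAt_id _)
    exact congrArg (fun L => L w) h4
  have htW : Φ.target ⊆ W := fun y hy => (hball y (htb hy)).1
  refine ⟨Φ.target, Φ.symm, fun y => ω y (fderiv ℝ Φ (Φ.symm y) e), η x, Φ.open_target, hxt, htW,
    hΦs, Φ.symm.injOn, ?_, ?_, ?_, ?_⟩
  · rw [Φ.symm_image_target_eq_source]
    exact Φ.open_source
  · intro y hy
    exact ⟨Function.LeftInverse.injective (hcomp1 y hy),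
      Function.RightInverse.surjective (hcomp2 y hy)⟩
  · have h2 : ContDiffOn ℝ (⊤ : ℕ∞) (fderiv ℝ Φ) Φ.source :=
      hΦ.fderiv_of_isOpen Φ.open_source (by simp)
    exact (hω.mono htW).clm_apply
      ((h2.comp hΦs (fun y hy => Φ.map_target hy)).clm_apply contDiffOn_const)
  · intro y hy
    refine ContinuousLinearMap.ext fun w => ?_
    set w' := fderiv ℝ Φ.symm y w with hw'
    have hk := hker (Φ.symm y) (Φ.map_target hy) (w' - η x w' • e) (by
      rw [map_sub, map_smul, h1 x (Metric.mem_ball_self (by positivity))]; simp)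
    rw [Φ.right_inv hy, map_sub, map_sub, hw', hcomp1 y hy, ← hw', map_smul, map_smul,
      sub_eq_zero] at hk
    change ω y w = ω y (fderiv ℝ Φ (Φ.symm y) e) * η x w'
    rw [hωη y (htb hy)]
    change d y * η y w = d y * η y (fderiv ℝ Φ (Φ.symm y) e) * η x w'
    rw [hk, smul_eq_mul]
    ring

end frob3

/-- Example 1.20: a smooth `1`-form `ω` with `ω_x ≠ 0` has conformal
constant coefficients near `x` iff `ω ∧ dω = 0` near `x`, where
`(ω∧dω)_y(v₁,v₂,v₃) = (1/2) Σ_σ sgn(σ) ω_y(v_{σ1}) dω_y(v_{σ2},v_{σ3})` and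
`dω_y(a,b) = (Dω_y(a))(b) − (Dω_y(b))(a)`. -/
theorem oneForm_conformalConstantCoefficients_iff (n : ℕ)
    (U : Set (Fin n → ℝ)) (hU : IsOpen U)
    (ω : (Fin n → ℝ) → ((Fin n → ℝ) [×1]→L[ℝ] ℝ))
    (hω : ContDiffOn ℝ (⊤ : ℕ∞) ω U)
    (x : Fin n → ℝ) (hx : x ∈ U) (hx0 : ω x ≠ 0) :
    HasConformalConstantCoefficientsFormAt n 1 U ω x ↔
      ∃ W : Set (Fin n → ℝ), IsOpen W ∧ x ∈ W ∧
        ∀ y ∈ W, ∀ v : Fin 3 → (Fin n → ℝ),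
          (1 / 2 : ℝ) * ∑ σ : Equiv.Perm (Fin 3),
            ((Equiv.Perm.sign σ : ℤ) : ℝ) * (ω y (fun _ => v (σ 0)) *
              (fderiv ℝ ω y (v (σ 1)) (fun _ => v (σ 2)) -
               fderiv ℝ ω y (v (σ 2)) (fun _ => v (σ 1)))) = 0 := by
  have hdiff : ∀ y ∈ U, DifferentiableAt ℝ ω y := fun y hy =>
    (hω.contDiffAt (hU.mem_nhds hy)).differentiableAt (by simp)
  let ω₁ : (Fin n → ℝ) → (Fin n → ℝ) →L[ℝ] ℝ := fun z => frobHat (Fin n → ℝ) (ω z)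
  have hω₁ : ContDiffOn ℝ (⊤ : ℕ∞) ω₁ U := by
    have : ContDiff ℝ (⊤ : ℕ∞) (fun q => frobHat (Fin n → ℝ) q) := by fun_prop
    exact this.comp_contDiffOn hω
  have happ : ∀ (c : (Fin n → ℝ) [×1]→L[ℝ] ℝ) (v : Fin 1 → Fin n → ℝ),
      c v = frobHat (Fin n → ℝ) c (v 0) := by
    intro c v
    rw [frobHat_apply]
    congr 1
    funext i
    rw [Subsingleton.elim i 0]
  constructor
  · rintro ⟨V, hV, hxV, hVU, f, hf, ω', ⟨V', hV', hxV', -, u, hu, -, -, -, c, hc⟩, hfω⟩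
    refine ⟨V ∩ V', hV.inter hV', ⟨hxV, hxV'⟩, fun y hy v => ?_⟩
    rw [frob_sum ω y (hdiff y (hVU hy.1))]
    obtain ⟨h1, h2⟩ := frobW_exact u y (hu.contDiffAt (hV'.mem_nhds hy.2))
      (frobHat (Fin n → ℝ) c) (v 0) (v 1) (v 2)
    rw [frobW_smul _ (fun z => (frobHat (Fin n → ℝ) c).comp (fderiv ℝ u z)) f y
      ((hf.contDiffAt (hV.mem_nhds hy.1)).differentiableAt (by simp)) h1, h2, mul_zero]
    filter_upwards [(hV.inter hV').mem_nhds hy] with z hz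
    refine ContinuousLinearMap.ext fun w => ?_
    rw [frobHat_apply, hfω z hz.1]
    change f z * ω' z (fun _ => w) = f z * frobHat (Fin n → ℝ) c (fderiv ℝ u z w)
    rw [hc z hz.2, happ]
  · rintro ⟨W, hW, hxW, hint⟩
    obtain ⟨V, u, f, ℓ, hV, hxV, hVW, hu, huinj, huo, hub, hf, hfω⟩ :=
      frob_conv ω₁ (W ∩ U) (hW.inter hU) (hω₁.mono inter_subset_right) x ⟨hxW, hx⟩ (by
        intro h
        apply hx0
        ext v
        rw [happ]
        change ω₁ x (v 0) = 0
        rw [h]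
        rfl) (by
        intro y hy a b c
        have h := hint y hy.1 ![a, b, c]
        rw [frob_sum ω y (hdiff y hy.2)] at h
        exact h)
    let c : (Fin n → ℝ) [×1]→L[ℝ] ℝ := (continuousMultilinearCurryFin1 ℝ (Fin n → ℝ) ℝ).symm ℓ
    have hcℓ : frobHat (Fin n → ℝ) c = ℓ :=
      (continuousMultilinearCurryFin1 ℝ (Fin n → ℝ) ℝ).apply_symm_apply ℓ
    refine ⟨V, hV, hxV, fun y hy => (hVW hy).2, f, hf,
      fun y => c.compContinuousLinearMap (fun _ => fderiv ℝ u y),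
      ⟨V, hV, hxV, subset_univ _, u, hu, huinj, huo, hub, c, fun y _ v => rfl⟩, fun y hy => ?_⟩
    ext v
    rw [happ]
    change ω₁ y (v 0) = f y * c (fun i => fderiv ℝ u y (v i))
    rw [hfω y hy, happ, hcℓ]
    rfl
end
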